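/- arXiv:1909.02922 — 2 statements merged into one kernel-verified Lean document; each statement's English description precedes it below -/
import Mathlib

section
/- Let κ > 1 and let (T_n) be a sequence of subsets of ℝ such that each T_n is κ-thick, i.e. for every r > 0 one has T_n ∩ ([−κr, −r] ∪ [r, κr]) ≠ ∅. Then the sequence (T_n) has accumulating renormalizations. -/
open Filter

/-- The topological `limsup` of a sequence of subsets of a topological space:
the set of points `x` such that every neighborhood of `x` meets `Q n` for
infinitely many `n`. -/
def seqLimsup {α : Type*} [TopologicalSpace α] (Q : ℕ → Set α) : Set α :=
  {x | ∀ O ∈ nhds x, {n | (O ∩ Q n).Nonempty}.Infinite}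

/-- A sequence `T : ℕ → Set ℝ` has accumulating renormalizations if for every
sequence `λ_n → +∞` of positive reals, the set `T_∞ = limsup_n λ_n⁻¹ T_n`
contains a sequence of nonzero elements tending to `0`, as well as a sequence
whose absolute values tend to `+∞`. -/
def HasAccumulatingRenormalizations (T : ℕ → Set ℝ) : Prop :=
  ∀ lam : ℕ → ℝ, (∀ n, 0 < lam n) → Tendsto lam atTop atTop →
    (∃ s : ℕ → ℝ,
      (∀ k, s k ∈ seqLimsup (fun n => (fun t => (lam n)⁻¹ * t) '' T n) ∧ s k ≠ 0) ∧
      Tendsto s atTop (nhds 0)) ∧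
    (∃ s : ℕ → ℝ,
      (∀ k, s k ∈ seqLimsup (fun n => (fun t => (lam n)⁻¹ * t) '' T n)) ∧
      Tendsto (fun k => |s k|) atTop atTop)

/-- A set `T ⊆ ℝ` is `κ`-thick if for every `r > 0` it meets
`[-κr, -r] ∪ [r, κr]`. -/
def IsKappaThick (κ : ℝ) (T : Set ℝ) : Prop :=
  ∀ r : ℝ, 0 < r → (T ∩ (Set.Icc (-(κ * r)) (-r) ∪ Set.Icc r (κ * r))).Nonempty

theorem exists_mem_seqLimsup_aux
    (κ : ℝ) (T : ℕ → Set ℝ) (hT : ∀ n, IsKappaThick κ (T n))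
    (lam : ℕ → ℝ) (hl : ∀ n, 0 < lam n) (r : ℝ) (hr : 0 < r) :
    ∃ x ∈ seqLimsup (fun n => (fun t => (lam n)⁻¹ * t) '' T n), r ≤ |x| ∧ |x| ≤ κ * r := by
  have key : ∀ n, ∃ x ∈ (fun t => (lam n)⁻¹ * t) '' T n,
      x ∈ Set.Icc (-(κ * r)) (-r) ∪ Set.Icc r (κ * r) := by
    intro n
    obtain ⟨t, ht, h⟩ := hT n (lam n * r) (mul_pos (hl n) hr)
    refine ⟨(lam n)⁻¹ * t, ⟨t, ht, rfl⟩, ?_⟩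
    have hn := hl n
    have e : t = lam n * ((lam n)⁻¹ * t) := by field_simp
    generalize (lam n)⁻¹ * t = y at e
    subst e
    rcases h with ⟨h1, h2⟩ | ⟨h1, h2⟩
    · left
      constructor
      · refine le_of_mul_le_mul_left ?_ hn
        linarith
      · refine le_of_mul_le_mul_left ?_ hn
        linarith
    · right
      constructor
      · exact le_of_mul_le_mul_left h1 hn
      · refine le_of_mul_le_mul_left ?_ hn
        linarith
  choose x hx hK using key
  obtain ⟨a, ha, φ, hφ, hlim⟩ := (isCompact_Icc.union isCompact_Icc).tendsto_subseq hK
  refine ⟨a, ?_, ?_⟩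
  · intro O hO
    have hev := hlim.eventually hO
    obtain ⟨N, hN⟩ := eventually_atTop.1 hev
    refine Set.infinite_of_not_bddAbove ?_
    rintro ⟨M, hM⟩
    have h1 : φ (max N (M + 1)) ≤ M :=
      hM ⟨x (φ (max N (M + 1))), hN _ (le_max_left _ _), hx _⟩
    have h2 := hφ.id_le (max N (M + 1))
    have h3 := le_max_right N (M + 1)
    simp only [id] at h2
    omega
  · rcases ha with ⟨h1, h2⟩ | ⟨h1, h2⟩
    · rw [abs_of_nonpos (by linarith)]
      constructor <;> linarith
    · rw [abs_of_nonneg (by linarith)]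
      exact ⟨h1, h2⟩

/-- If `κ > 1` and each `T n` is `κ`-thick, then the sequence `(T n)` has
accumulating renormalizations. -/
theorem thick_implies_accumulating_renormalizations
    (κ : ℝ) (hκ : 1 < κ) (T : ℕ → Set ℝ) (hT : ∀ n, IsKappaThick κ (T n)) :
    HasAccumulatingRenormalizations T := by
  intro lam hl _
  have key := exists_mem_seqLimsup_aux κ T hT lam hl
  constructor
  · have h : ∀ k : ℕ, (0 : ℝ) < 1 / ((k : ℝ) + 1) := fun k => by positivity
    choose s hs h1 h2 using fun k : ℕ => key _ (h k)
    refine ⟨s, fun k => ⟨hs k, abs_pos.1 ((h k).trans_le (h1 k))⟩, ?_⟩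
    refine squeeze_zero_norm (fun k => h2 k) ?_
    simpa using (tendsto_one_div_add_atTop_nhds_zero_nat (𝕜 := ℝ)).const_mul κ
  · have h : ∀ k : ℕ, (0 : ℝ) < (k : ℝ) + 1 := fun k => by positivity
    choose s hs h1 h2 using fun k : ℕ => key _ (h k)
    refine ⟨s, hs, tendsto_atTop_mono (fun k => ?_) tendsto_natCast_atTop_atTop⟩
    linarith [h1 k]
end

section
/- Let Γ be a discrete subgroup of G = PSL(2,ℂ) such that Γ\G is compact (a uniform lattice). Then for every x ∈ Γ\G, the orbit xH of the subgroup H = π(SL(2,ℝ)) is either closed in Γ\G or dense in Γ\G. -/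
open scoped MatrixGroups
open Matrix Filter

noncomputable section

/-- `SL(2,ℂ)`. -/
abbrev SL2C := Matrix.SpecialLinearGroup (Fin 2) ℂ

instance : TopologicalSpace SL2C := instTopologicalSpaceSubtype

/-- `G = PSL(2,ℂ) = SL(2,ℂ)/{±I}`, with the quotient topology. -/
abbrev PSL2C := Matrix.ProjectiveSpecialLinearGroup (Fin 2) ℂ

/-- The projection `π : SL(2,ℂ) → PSL(2,ℂ)`. -/
def pr : SL2C →* PSL2C := QuotientGroup.mk' _

/-- The upper triangular unipotent matrix `[[1, t],[0, 1]]` as an element of `SL(2,ℂ)`. -/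
def uMat (t : ℂ) : SL2C := ⟨!![1, t; 0, 1], by simp [Matrix.det_fin_two_of]⟩

/-- `u_t = π [[1, t],[0, 1]]` for `t ∈ ℝ`. -/
def uu (t : ℝ) : PSL2C := pr (uMat t)

/-- `v_s = π [[1, is],[0, 1]]` for `s ∈ ℝ`. -/
def vv (s : ℝ) : PSL2C := pr (uMat (s * Complex.I))

/-- The subgroup `U = {u_t : t ∈ ℝ}` as a subset of `PSL(2,ℂ)`. -/
def Uset : Set PSL2C := Set.range uu

/-- The subgroup `V = {v_s : s ∈ ℝ}` as a subset of `PSL(2,ℂ)`. -/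
def Vset : Set PSL2C := Set.range vv

/-- The subgroup `N = {π [[1, z],[0,1]] : z ∈ ℂ}` as a subset of `PSL(2,ℂ)`. -/
def Nset : Set PSL2C := {x | ∃ z : ℂ, x = pr (uMat z)}

/-- `H = π (SL(2,ℝ))`, the image in `PSL(2,ℂ)` of the real matrices. -/
def Hset : Set PSL2C :=
  {x | ∃ g : Matrix.SpecialLinearGroup (Fin 2) ℝ,
    x = pr (Matrix.SpecialLinearGroup.map (algebraMap ℝ ℂ) g)}

/-- The upper triangular matrix `[[a, z],[0, a⁻¹]]` as an element of `SL(2,ℂ)`,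
for a nonzero real `a`. -/
def tri (a : ℝ) (ha : a ≠ 0) (z : ℂ) : SL2C :=
  ⟨!![(a : ℂ), z; 0, (a : ℂ)⁻¹], by
    have h : (a : ℂ) ≠ 0 := by exact_mod_cast ha
    simp [Matrix.det_fin_two_of, mul_inv_cancel₀ h]⟩

/-- `AN = {π [[a, z],[0, a⁻¹]] : a > 0 real, z ∈ ℂ}`. -/
def ANset : Set PSL2C := {x | ∃ (a : ℝ) (ha : 0 < a) (z : ℂ), x = pr (tri a ha.ne' z)}

/-- `AV = {π [[a, ib],[0, a⁻¹]] : a > 0 real, b ∈ ℝ}`. -/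
def AVset : Set PSL2C :=
  {x | ∃ (a : ℝ) (ha : 0 < a) (b : ℝ), x = pr (tri a ha.ne' (b * Complex.I))}

/-- `A = {π diag(a, a⁻¹) : a > 0 real}`. -/
def Aset : Set PSL2C := {x | ∃ (a : ℝ) (ha : 0 < a), x = pr (tri a ha.ne' 0)}

variable (Γ : Subgroup PSL2C)

/-- The space `Γ\\G` of right cosets `Γg`, with the quotient topology. -/
abbrev XΓ := Quotient (QuotientGroup.rightRel Γ)

/-- The natural projection `G → Γ\\G`. -/
def mkX (g : PSL2C) : XΓ Γ := Quotient.mk'' g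

/-- The right translation action of `G` on `Γ\\G`: `(Γg₀)·g = Γ(g₀g)`. -/
def act (x : XΓ Γ) (g : PSL2C) : XΓ Γ :=
  Quotient.map' (fun h => h * g)
    (fun a b hab => by
      rw [QuotientGroup.rightRel_apply] at hab ⊢
      simpa [_root_.mul_inv_rev, mul_assoc] using hab) x

/-- The orbit `xS = {x·s : s ∈ S}` of a point `x ∈ Γ\\G` under a subset `S ⊆ G`. -/
def orb (x : XΓ Γ) (S : Set PSL2C) : Set (XΓ Γ) := (fun s => act Γ x s) '' S

/-- `Γ` is a lattice in `G`: there is a nonzero finite Borel measure on `Γ\\G`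
invariant under the right translation action of `G`. -/
def IsLattice : Prop :=
  letI : MeasurableSpace (XΓ Γ) := borel _
  ∃ μ : MeasureTheory.Measure (XΓ Γ), μ ≠ 0 ∧ MeasureTheory.IsFiniteMeasure μ ∧
    ∀ g : PSL2C, MeasureTheory.Measure.map (fun x => act Γ x g) μ = μ


/-! ### Basic facts about `SL(2,ℂ)` -/

open scoped Topology

instance instTopGrpSL2C : IsTopologicalGroup SL2C := Matrix.SpecialLinearGroup.topologicalGroup

theorem val_closedEmb :
    Topology.IsClosedEmbedding (fun g : SL2C => (g : Matrix (Fin 2) (Fin 2) ℂ)) := by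
  refine ⟨⟨⟨rfl⟩, Subtype.val_injective⟩, ?_⟩
  have : (Set.range fun g : SL2C => (g : Matrix (Fin 2) (Fin 2) ℂ)) = {A | A.det = 1} := by
    ext A; exact ⟨fun ⟨g, hg⟩ => hg ▸ g.2, fun h => ⟨⟨A, h⟩, rfl⟩⟩
  rw [this]
  exact isClosed_eq (Continuous.matrix_det continuous_id) continuous_const

instance instFCMat : FirstCountableTopology (Matrix (Fin 2) (Fin 2) ℂ) :=
  inferInstanceAs (FirstCountableTopology (Fin 2 → Fin 2 → ℂ))

instance instFCSL2C : FirstCountableTopology SL2C :=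
  val_closedEmb.isInducing.firstCountableTopology

theorem tendsto_SL {ι : Type*} {l : Filter ι} {f : ι → SL2C} {M : SL2C} :
    Tendsto f l (𝓝 M) ↔ ∀ i j, Tendsto (fun n => f n i j) l (𝓝 (M i j)) := by
  refine (val_closedEmb.isInducing.tendsto_nhds_iff).trans ?_
  refine (tendsto_pi_nhds (ι := Fin 2)).trans ?_
  refine forall_congr' fun i => ?_
  exact tendsto_pi_nhds

theorem tendsto_SL4 {ι : Type*} {l : Filter ι} {f : ι → SL2C} {M : SL2C}
    (h00 : Tendsto (fun n => f n 0 0) l (𝓝 (M 0 0)))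
    (h01 : Tendsto (fun n => f n 0 1) l (𝓝 (M 0 1)))
    (h10 : Tendsto (fun n => f n 1 0) l (𝓝 (M 1 0)))
    (h11 : Tendsto (fun n => f n 1 1) l (𝓝 (M 1 1))) : Tendsto f l (𝓝 M) := by
  rw [tendsto_SL]
  intro i j
  fin_cases i <;> fin_cases j <;> assumption

theorem continuous_entry (i j : Fin 2) : Continuous (fun g : SL2C => g i j) := by
  rw [continuous_iff_continuousAt]
  intro g
  exact (tendsto_SL.1 (tendsto_id : Tendsto (id : SL2C → SL2C) (𝓝 g) (𝓝 g))) i j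

theorem sl_ext {g h : SL2C} (h00 : g 0 0 = h 0 0) (h01 : g 0 1 = h 0 1) (h10 : g 1 0 = h 1 0)
    (h11 : g 1 1 = h 1 1) : g = h := by
  apply Matrix.SpecialLinearGroup.ext
  intro i j
  fin_cases i <;> fin_cases j <;> assumption

theorem mul00 (g h : SL2C) : (g * h) 0 0 = g 0 0 * h 0 0 + g 0 1 * h 1 0 := by
  simp [Matrix.mul_apply, Fin.sum_univ_two]
theorem mul01 (g h : SL2C) : (g * h) 0 1 = g 0 0 * h 0 1 + g 0 1 * h 1 1 := by
  simp [Matrix.mul_apply, Fin.sum_univ_two]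
theorem mul10 (g h : SL2C) : (g * h) 1 0 = g 1 0 * h 0 0 + g 1 1 * h 1 0 := by
  simp [Matrix.mul_apply, Fin.sum_univ_two]
theorem mul11 (g h : SL2C) : (g * h) 1 1 = g 1 0 * h 0 1 + g 1 1 * h 1 1 := by
  simp [Matrix.mul_apply, Fin.sum_univ_two]
theorem inv00 (g : SL2C) : g⁻¹ 0 0 = g 1 1 := by
  rw [Matrix.SpecialLinearGroup.SL2_inv_expl]; rfl
theorem inv01 (g : SL2C) : g⁻¹ 0 1 = - g 0 1 := by
  rw [Matrix.SpecialLinearGroup.SL2_inv_expl]; rfl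
theorem inv10 (g : SL2C) : g⁻¹ 1 0 = - g 1 0 := by
  rw [Matrix.SpecialLinearGroup.SL2_inv_expl]; rfl
theorem inv11 (g : SL2C) : g⁻¹ 1 1 = g 0 0 := by
  rw [Matrix.SpecialLinearGroup.SL2_inv_expl]; rfl
theorem one00 : (1 : SL2C) 0 0 = 1 := by simp
theorem one01 : (1 : SL2C) 0 1 = 0 := by simp
theorem one10 : (1 : SL2C) 1 0 = 0 := by simp
theorem one11 : (1 : SL2C) 1 1 = 1 := by simp
theorem sl_det (g : SL2C) : g 0 0 * g 1 1 - g 0 1 * g 1 0 = 1 := by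
  have := g.2
  rwa [Matrix.det_fin_two] at this

/-- The matrix with the given entries. -/
def slm (a b c d : ℂ) (h : a * d - b * c = 1) : SL2C :=
  ⟨!![a, b; c, d], by rw [Matrix.det_fin_two_of]; exact h⟩

theorem slm00 (a b c d : ℂ) (h) : (slm a b c d h) 0 0 = a := rfl
theorem slm01 (a b c d : ℂ) (h) : (slm a b c d h) 0 1 = b := rfl
theorem slm10 (a b c d : ℂ) (h) : (slm a b c d h) 1 0 = c := rfl
theorem slm11 (a b c d : ℂ) (h) : (slm a b c d h) 1 1 = d := rfl

theorem uM00 (z : ℂ) : (uMat z) 0 0 = 1 := rfl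
theorem uM01 (z : ℂ) : (uMat z) 0 1 = z := rfl
theorem uM10 (z : ℂ) : (uMat z) 1 0 = 0 := rfl
theorem uM11 (z : ℂ) : (uMat z) 1 1 = 1 := rfl

/-- Lower unipotent matrix. -/
def nM (w : ℂ) : SL2C := slm 1 0 w 1 (by ring)
theorem nM00 (z : ℂ) : (nM z) 0 0 = 1 := rfl
theorem nM01 (z : ℂ) : (nM z) 0 1 = 0 := rfl
theorem nM10 (z : ℂ) : (nM z) 1 0 = z := rfl
theorem nM11 (z : ℂ) : (nM z) 1 1 = 1 := rfl

/-- Diagonal matrix with entries `exp t`, `exp (-t)`. -/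
def dg (t : ℂ) : SL2C := slm (Complex.exp t) 0 0 (Complex.exp (-t)) (by
  rw [← Complex.exp_add]; simp)
theorem dg00 (z : ℂ) : (dg z) 0 0 = Complex.exp z := rfl
theorem dg01 (z : ℂ) : (dg z) 0 1 = 0 := rfl
theorem dg10 (z : ℂ) : (dg z) 1 0 = 0 := rfl
theorem dg11 (z : ℂ) : (dg z) 1 1 = Complex.exp (-z) := rfl

theorem dg_add (s t : ℂ) : dg (s + t) = dg s * dg t := by
  apply sl_ext <;> simp only [mul00, mul01, mul10, mul11, dg00, dg01, dg10, dg11] <;>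
    simp [Complex.exp_add, mul_comm]
theorem dg_zero : dg 0 = 1 := by
  apply sl_ext <;> simp [dg00, dg01, dg10, dg11]
theorem dg_neg (s : ℂ) : dg (-s) = (dg s)⁻¹ := by
  rw [eq_inv_iff_mul_eq_one, ← dg_add]; simp [dg_zero]
theorem uM_add (s t : ℂ) : uMat (s + t) = uMat s * uMat t := by
  apply sl_ext <;> simp only [mul00, mul01, mul10, mul11, uM00, uM01, uM10, uM11] <;> ring
theorem uM_zero : uMat 0 = 1 := by
  apply sl_ext <;> simp [uM00, uM01, uM10, uM11]
theorem uM_neg (s : ℂ) : uMat (-s) = (uMat s)⁻¹ := by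
  rw [eq_inv_iff_mul_eq_one, ← uM_add]; simp [uM_zero]
theorem dg_uM (t z : ℂ) : dg t * uMat z = uMat (Complex.exp (2 * t) * z) * dg t := by
  have h : Complex.exp (2 * t) = Complex.exp t * Complex.exp t := by
    rw [← Complex.exp_add]; ring_nf
  have h2 : Complex.exp t * Complex.exp (-t) = 1 := by rw [← Complex.exp_add]; simp
  apply sl_ext <;>
    simp only [mul00, mul01, mul10, mul11, uM00, uM01, uM10, uM11, dg00, dg01, dg10, dg11, h]
  · ring
  · linear_combination (-Complex.exp t * z) * h2
  · ring
  · ring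

/-- left invariance -/
def LInv (Λ : Subgroup SL2C) (Y : Set SL2C) : Prop := ∀ γ ∈ Λ, ∀ y ∈ Y, γ * y ∈ Y
/-- right invariance -/
def RInv (L : Set SL2C) (Y : Set SL2C) : Prop := ∀ y ∈ Y, ∀ l ∈ L, y * l ∈ Y
/-- cocompactness -/
def Coc (Λ : Subgroup SL2C) : Prop := ∃ R : ℝ, ∀ g, ∃ γ ∈ Λ, ∀ i j, ‖(γ * g) i j‖ ≤ R
/-- discreteness modulo the center -/
def Dsc (Λ : Subgroup SL2C) : Prop := ∃ O ∈ 𝓝 (1 : SL2C), ∀ γ ∈ Λ, γ ∈ O →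
  γ ∈ Subgroup.center SL2C

theorem compact_bd (R : ℝ) : IsCompact {g : SL2C | ∀ i j, ‖g i j‖ ≤ R} := by
  have h1 : IsCompact (Set.pi Set.univ (fun _ : Fin 2 =>
      (Set.pi Set.univ (fun _ : Fin 2 => Metric.closedBall (0 : ℂ) R)))) :=
    isCompact_univ_pi (fun _ => isCompact_univ_pi (fun _ => isCompact_closedBall _ _))
  have h2 := val_closedEmb.isCompact_preimage (K := (Set.pi Set.univ (fun _ : Fin 2 =>
      (Set.pi Set.univ (fun _ : Fin 2 => Metric.closedBall (0 : ℂ) R))))) h1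
  convert h2 using 1
  ext g
  constructor
  · intro h i _ j _
    exact mem_closedBall_zero_iff.2 (h i j)
  · intro h i j
    exact mem_closedBall_zero_iff.1 (h i trivial j trivial)

theorem Coc.subseq {Λ : Subgroup SL2C} (hc : Coc Λ) (g : ℕ → SL2C) :
    ∃ (φ : ℕ → ℕ) (γ : ℕ → SL2C) (z : SL2C), StrictMono φ ∧ (∀ n, γ n ∈ Λ) ∧
      Tendsto (fun n => γ n * g (φ n)) atTop (𝓝 z) := by
  obtain ⟨R, hR⟩ := hc
  choose γ hγ hb using fun n => hR (g n)
  obtain ⟨z, -, φ, hφ, ht⟩ := (compact_bd R).tendsto_subseq (x := fun n => γ n * g n) hb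
  exact ⟨φ, fun n => γ (φ n), z, hφ, fun n => hγ _, ht⟩

/-- return set -/
def Ret (Y Z : Set SL2C) : Set SL2C := {g | ∃ y ∈ Y, y * g ∈ Z}

theorem Ret.closed {Λ : Subgroup SL2C} (hc : Coc Λ) {Y Z : Set SL2C} (hY : IsClosed Y)
    (hZ : IsClosed Z) (lY : LInv Λ Y) (lZ : LInv Λ Z) : IsClosed (Ret Y Z) := by
  apply IsSeqClosed.isClosed
  intro g g0 hg hlim
  choose y hy hyg using hg
  obtain ⟨φ, γ, z, hφ, hγ, ht⟩ := hc.subseq y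
  refine ⟨z, hY.mem_of_tendsto ht (Eventually.of_forall fun n => lY _ (hγ n) _ (hy _)), ?_⟩
  refine hZ.mem_of_tendsto (ht.mul (hlim.comp hφ.tendsto_atTop)) (Eventually.of_forall fun n => ?_)
  have := lZ _ (hγ n) _ (hyg (φ n))
  simpa [mul_assoc] using this

/-- minimal sets -/
structure IsMinSet (Λ : Subgroup SL2C) (L : Set SL2C) (Y : Set SL2C) : Prop where
  cl : IsClosed Y
  ne : Y.Nonempty
  li : LInv Λ Y
  ri : RInv L Y
  mn : ∀ Z ⊆ Y, IsClosed Z → Z.Nonempty → LInv Λ Z → RInv L Z → Y ⊆ Z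

theorem exists_min {Λ : Subgroup SL2C} (hc : Coc Λ) {L : Set SL2C} {X : Set SL2C}
    (hX : IsClosed X) (hne : X.Nonempty) (hl : LInv Λ X) (hr : RInv L X) :
    ∃ Y ⊆ X, IsMinSet Λ L Y := by
  obtain ⟨R, hR⟩ := hc
  let S : Set (Set SL2C) := {Z | IsClosed Z ∧ Z.Nonempty ∧ LInv Λ Z ∧ RInv L Z}
  have hmeet : ∀ Z ∈ S, (Z ∩ {g : SL2C | ∀ i j, ‖g i j‖ ≤ R}).Nonempty := by
    rintro Z ⟨-, ⟨z, hz⟩, hZl, -⟩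
    obtain ⟨γ, hγ, hb⟩ := hR z
    exact ⟨γ * z, hZl _ hγ _ hz, hb⟩
  obtain ⟨m, hmX, hm⟩ := zorn_superset_nonempty S (by
    intro c hcS hchain hcne
    refine ⟨⋂₀ c, ⟨isClosed_sInter fun Z hZ => (hcS hZ).1, ?_, ?_, ?_⟩,
      fun s hs => Set.sInter_subset_of_mem hs⟩
    · have : Nonempty c := hcne.to_subtype
      have := IsCompact.nonempty_iInter_of_directed_nonempty_isCompact_isClosed
        (fun Z : c => (Z : Set SL2C) ∩ {g : SL2C | ∀ i j, ‖g i j‖ ≤ R})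
        (by
          intro A B
          rcases hchain.total A.2 B.2 with h | h
          · exact ⟨A, subset_rfl, Set.inter_subset_inter_left _ h⟩
          · exact ⟨B, Set.inter_subset_inter_left _ h, subset_rfl⟩)
        (fun Z => hmeet _ (hcS Z.2))
        (fun Z => (compact_bd R).inter_left (hcS Z.2).1)
        (fun Z => (hcS Z.2).1.inter (by
          have : {g : SL2C | ∀ i j, ‖g i j‖ ≤ R} = ⋂ i, ⋂ j, {g : SL2C | ‖g i j‖ ≤ R} := by
            ext; simp
          rw [this]
          exact isClosed_iInter fun i => isClosed_iInter fun j =>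
            isClosed_le (continuous_entry i j).norm continuous_const))
      obtain ⟨z, hz⟩ := this
      refine ⟨z, fun Z hZ => ?_⟩
      exact (Set.mem_iInter.1 hz ⟨Z, hZ⟩).1
    · intro γ hγ y hy Z hZ
      exact (hcS hZ).2.2.1 γ hγ y (hy Z hZ)
    · intro y hy l hl' Z hZ
      exact (hcS hZ).2.2.2 y (hy Z hZ) l hl') X ⟨hX, hne, hl, hr⟩
  refine ⟨m, hmX, hm.prop.1, hm.prop.2.1, hm.prop.2.2.1, hm.prop.2.2.2, ?_⟩
  intro Z hZm h1 h2 h3 h4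
  exact hm.le_of_le (y := Z) ⟨h1, h2, h3, h4⟩ hZm

theorem IsMinSet.norm_mem {Λ : Subgroup SL2C} {L Y Z : Set SL2C} (hY : IsMinSet Λ L Y)
    (hZ : IsClosed Z) (lZ : LInv Λ Z) (rZ : RInv L Z) {g : SL2C} (hg : g ∈ Ret Y Z)
    (hn : ∀ l ∈ L, ∃ l' ∈ L, l * g = g * l') : ∀ y ∈ Y, y * g ∈ Z := by
  have key := hY.mn {y | y ∈ Y ∧ y * g ∈ Z} (fun y hy => hy.1)
    (hY.cl.inter (hZ.preimage (continuous_mul_const g))) hg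
    (fun γ hγ y hy => ⟨hY.li γ hγ y hy.1, by
      have := lZ γ hγ _ hy.2
      simpa [mul_assoc] using this⟩)
    (fun y hy l hl => ⟨hY.ri y hy.1 l hl, by
      obtain ⟨l', hl', e⟩ := hn l hl
      have := rZ _ hy.2 l' hl'
      rwa [mul_assoc, e, ← mul_assoc]⟩)
  exact fun y hy => (key hy).2

theorem Ret.inv_mem {Y Z : Set SL2C} {g : SL2C} (hg : g ∈ Ret Y Z) : g⁻¹ ∈ Ret Z Y := by
  obtain ⟨y, hy, h⟩ := hg
  exact ⟨y * g, h, by simpa using hy⟩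

theorem Ret.lmul {L Y Z : Set SL2C} (hY : RInv L Y) {g l : SL2C} (hg : g ∈ Ret Y Z)
    (hl : l⁻¹ ∈ L) : l * g ∈ Ret Y Z := by
  obtain ⟨y, hy, h⟩ := hg
  exact ⟨y * l⁻¹, hY _ hy _ hl, by simpa [mul_assoc] using h⟩

theorem Ret.rmul {L Y Z : Set SL2C} (hZ : RInv L Z) {g l : SL2C} (hg : g ∈ Ret Y Z)
    (hl : l ∈ L) : g * l ∈ Ret Y Z := by
  obtain ⟨y, hy, h⟩ := hg
  exact ⟨y, hy, by simpa [mul_assoc] using hZ _ h _ hl⟩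

/-- No unipotents in a cocompact discrete group. -/
theorem no_unip {Λ : Subgroup SL2C} (hc : Coc Λ) (hd : Dsc Λ) {y : SL2C} {w : ℂ}
    (h : y * uMat w * y⁻¹ ∈ Λ) : w = 0 := by
  obtain ⟨O, hO, hOc⟩ := hd
  obtain ⟨φ, γ, z, hφ, hγ, ht⟩ := hc.subseq (fun n => y * dg (n : ℝ))
  have h1 : Tendsto (fun n : ℕ => uMat (Complex.exp (2 * (-((φ n : ℝ) : ℂ))) * w)) atTop (𝓝 1) := by
    have : Tendsto (fun n : ℕ => Complex.exp (2 * (-((φ n : ℝ) : ℂ))) * w) atTop (𝓝 0) := by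
      rw [← zero_mul w]
      refine Tendsto.mul_const w ?_
      rw [tendsto_zero_iff_norm_tendsto_zero]
      simp only [Complex.norm_exp]
      refine Real.tendsto_exp_atBot.comp ?_
      have e : (fun n : ℕ => (2 * (-((φ n : ℝ) : ℂ))).re) = fun n : ℕ => (-2 : ℝ) * (φ n : ℝ) := by
        ext n; simp
      rw [e]
      exact (tendsto_natCast_atTop_atTop.comp hφ.tendsto_atTop).const_mul_atTop_of_neg (by norm_num)
    apply tendsto_SL4 <;> simp only [uM00, uM01, uM10, uM11, one00, one01, one10, one11]
    · exact tendsto_const_nhds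
    · exact this
    · exact tendsto_const_nhds
    · exact tendsto_const_nhds
  have h2 := (ht.mul h1).mul ht.inv
  simp only [mul_one, mul_inv_cancel] at h2
  obtain ⟨n, hn⟩ := (h2.eventually hO).exists
  have e : γ n * (y * dg (φ n : ℝ)) * uMat (Complex.exp (2 * (-((φ n : ℝ) : ℂ))) * w) *
      (γ n * (y * dg (φ n : ℝ)))⁻¹ = γ n * (y * uMat w * y⁻¹) * (γ n)⁻¹ := by
    have : uMat (Complex.exp (2 * (-((φ n : ℝ) : ℂ))) * w) =
        (dg (φ n : ℝ))⁻¹ * uMat w * dg (φ n : ℝ) := by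
      rw [← dg_neg, dg_uM, mul_assoc, ← dg_add]; simp [dg_zero]
    rw [this]; group
  rw [e] at hn
  have hcen := hOc _ (Λ.mul_mem (Λ.mul_mem (hγ n) h) (Λ.inv_mem (hγ n))) hn
  have e2 : uMat w = γ n * (y * uMat w * y⁻¹) * (γ n)⁻¹ := by
    have := Subgroup.mem_center_iff.1 hcen ((γ n * y)⁻¹)
    have e3 : (γ n * y)⁻¹ * (γ n * (y * uMat w * y⁻¹) * (γ n)⁻¹) = uMat w * (γ n * y)⁻¹ := by group
    rw [e3] at this
    exact mul_right_cancel this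
  have e4 := Subgroup.mem_center_iff.1 hcen (nM 1)
  rw [← e2] at e4
  have := congrArg (fun g : SL2C => g 0 0) e4
  simp only [mul00, nM00, nM01, nM10, uM00, uM01, uM10] at this
  simpa using this

/-! ### The parabolic subgroup -/

theorem lin_unbdd {φ : ℕ → ℕ} (hφ : StrictMono φ) {b e z : ℂ}
    (h : Tendsto (fun n => b + (φ n : ℂ) * e) atTop (𝓝 z)) : e = 0 := by
  by_contra he
  have h1 : Tendsto (fun n => ‖(φ n : ℂ) * e‖) atTop (𝓝 ‖z - b‖) := by
    have := (h.sub_const b).norm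
    simpa using this
  have h2 : Tendsto (fun n => ‖(φ n : ℂ) * e‖) atTop atTop := by
    simp only [norm_mul, Complex.norm_natCast]
    exact (tendsto_natCast_atTop_atTop.comp hφ.tendsto_atTop).atTop_mul_const (norm_pos_iff.2 he)
  exact not_tendsto_nhds_of_tendsto_atTop h2 _ h1

theorem no_parab {Λ : Subgroup SL2C} (hc : Coc Λ) (hd : Dsc Λ) (y : SL2C)
    (h : ∀ γ ∈ Λ, (y⁻¹ * γ * y) 1 0 = 0) : False := by
  have hcomm : ∀ γ ∈ Λ, ∀ δ ∈ Λ, γ * δ = δ * γ := by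
    intro γ hγ δ hδ
    obtain ⟨p, hp⟩ : ∃ p, p = y⁻¹ * γ * y := ⟨_, rfl⟩
    obtain ⟨q, hq⟩ : ∃ q, q = y⁻¹ * δ * y := ⟨_, rfl⟩
    have hp0 : p 1 0 = 0 := hp ▸ h γ hγ
    have hq0 : q 1 0 = 0 := hq ▸ h δ hδ
    have dp := sl_det p
    have dq := sl_det q
    rw [hp0] at dp
    rw [hq0] at dq
    have hu : p * q * p⁻¹ * q⁻¹ = uMat ((p * q * p⁻¹ * q⁻¹) 0 1) := by
      apply sl_ext <;> simp only [uM00, uM01, uM10, uM11] <;>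
        simp only [mul00, mul01, mul10, mul11, inv00, inv01, inv10, inv11, hp0, hq0]
      · linear_combination (p 0 0 * p 1 1) * dq + dp
      · ring
      · linear_combination (p 0 0 * p 1 1) * dq + dp
    have e : y * (p * q * p⁻¹ * q⁻¹) * y⁻¹ = γ * δ * γ⁻¹ * δ⁻¹ := by
      rw [hp, hq]; group
    rw [hu] at e
    have hw := no_unip hc hd (y := y) (w := (p * q * p⁻¹ * q⁻¹) 0 1) (by
      rw [e]
      exact Λ.mul_mem (Λ.mul_mem (Λ.mul_mem hγ hδ) (Λ.inv_mem hγ)) (Λ.inv_mem hδ))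
    rw [hw, uM_zero] at e
    have e' : γ * δ * γ⁻¹ * δ⁻¹ = 1 := by rw [← e]; group
    calc γ * δ = (γ * δ * γ⁻¹ * δ⁻¹) * (δ * γ) := by group
      _ = δ * γ := by rw [e', one_mul]
  have hsc : ∀ γ ∈ Λ, ∃ a : ℂ, a * a = 1 ∧ ∀ g : SL2C, (γ * g) 0 1 = a * g 0 1 := by
    intro γ0 hγ0
    obtain ⟨p, hp⟩ : ∃ p, p = y⁻¹ * γ0 * y := ⟨_, rfl⟩
    have hp0 : p 1 0 = 0 := hp ▸ h γ0 hγ0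
    have dp := sl_det p
    rw [hp0] at dp
    obtain ⟨φ, γ, z, hφ, hγ, ht⟩ := hc.subseq (fun n => y * (uMat (n : ℂ))⁻¹)
    have h1 := (ht.inv.mul_const γ0).mul ht
    have e : ∀ n, (γ n * (y * (uMat (φ n : ℂ))⁻¹))⁻¹ * γ0 * (γ n * (y * (uMat (φ n : ℂ))⁻¹)) =
        uMat (φ n : ℂ) * p * (uMat (φ n : ℂ))⁻¹ := by
      intro n
      have e1 : γ0 = γ n * γ0 * (γ n)⁻¹ := by
        rw [hcomm _ (hγ n) _ hγ0]; group
      calc (γ n * (y * (uMat (φ n : ℂ))⁻¹))⁻¹ * γ0 * (γ n * (y * (uMat (φ n : ℂ))⁻¹))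
          = (γ n * (y * (uMat (φ n : ℂ))⁻¹))⁻¹ * (γ n * γ0 * (γ n)⁻¹) *
            (γ n * (y * (uMat (φ n : ℂ))⁻¹)) := by rw [← e1]
        _ = uMat (φ n : ℂ) * p * (uMat (φ n : ℂ))⁻¹ := by rw [hp]; group
    simp only [e] at h1
    have h2 := tendsto_SL.1 h1 0 1
    have h3 : Tendsto (fun n => p 0 1 + (φ n : ℂ) * (p 1 1 - p 0 0)) atTop
        (𝓝 ((z⁻¹ * γ0 * z) 0 1)) := by
      refine h2.congr fun n => ?_
      simp only [mul00, mul01, inv01, inv11, uM00, uM01, hp0]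
      ring
    have hda := lin_unbdd hφ h3
    have hda' : p 1 1 = p 0 0 := sub_eq_zero.1 hda
    rw [hda'] at dp
    have haa : p 0 0 * p 0 0 = 1 := by linear_combination dp
    have e2 : y * uMat (2 * p 0 0 * p 0 1) * y⁻¹ = γ0 * γ0 := by
      have : uMat (2 * p 0 0 * p 0 1) = p * p := by
        apply sl_ext <;> simp only [mul00, mul01, mul10, mul11, uM00, uM01, uM10, uM11, hp0, hda']
        · linear_combination - haa
        · ring
        · ring
        · linear_combination - haa
      rw [this, hp]; group
    have h4 := no_unip hc hd (e2 ▸ Λ.mul_mem hγ0 hγ0)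
    have hne : p 0 0 ≠ 0 := by rintro h5; rw [h5] at haa; simp at haa
    have hb : p 0 1 = 0 := by
      rcases mul_eq_zero.1 h4 with h5 | h5
      · exact absurd h5 (mul_ne_zero two_ne_zero hne)
      · exact h5
    refine ⟨p 0 0, haa, fun g => ?_⟩
    have e3 : γ0 * g = y * (p * (y⁻¹ * g)) := by rw [hp]; group
    have e4 : g 0 1 = (y * (y⁻¹ * g)) 0 1 := by group
    rw [e3, e4, mul01, mul01 p, mul11 p, mul01 y (y⁻¹ * g), hp0, hb, hda']
    ring
  obtain ⟨φ, γ, z, hφ, hγ, ht⟩ := hc.subseq (fun n => uMat (n : ℂ))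
  choose a ha hag using fun n => hsc (γ n) (hγ n)
  have h1 := (tendsto_SL.1 ht 0 1).norm
  have h2 : (fun n => ‖(γ n * uMat (φ n : ℂ)) 0 1‖) = fun n => (φ n : ℝ) := by
    ext n
    have hn : ‖a n‖ = 1 := by
      have := congrArg norm (ha n)
      rw [norm_mul, norm_one] at this
      nlinarith [norm_nonneg (a n)]
    rw [hag, norm_mul, hn, uM01]; simp
  rw [h2] at h1
  exact not_tendsto_nhds_of_tendsto_atTop
    (tendsto_natCast_atTop_atTop.comp hφ.tendsto_atTop) _ h1

/-- parabolic subgroup -/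
def PS : Set SL2C := {g | g 1 0 = 0}
/-- the group AN -/
def ANS : Set SL2C := {g | g 1 0 = 0 ∧ (g 0 0).im = 0 ∧ 0 < (g 0 0).re}

theorem P_full {Λ : Subgroup SL2C} (hc : Coc Λ) (hd : Dsc Λ) {Y : Set SL2C} (hY : IsClosed Y)
    (hne : Y.Nonempty) (hl : LInv Λ Y) (hr : RInv PS Y) (z : SL2C) : z ∈ Y := by
  by_contra hz
  have rF : ∀ y, y ∉ Y → ∀ p : SL2C, p 1 0 = 0 → y * p ∉ Y := by
    intro y hy p hp hmem
    apply hy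
    have := hr _ hmem p⁻¹ (show p⁻¹ 1 0 = 0 by rw [inv10, hp, neg_zero])
    simpa using this
  have lF : ∀ y, y ∉ Y → ∀ γ ∈ Λ, γ * y ∉ Y := by
    intro y hy γ hγ hmem
    apply hy
    have := hl _ (Λ.inv_mem hγ) _ hmem
    simpa using this
  -- a ball
  have hball : ∀ᶠ w in 𝓝 (0 : ℂ), z * nM w ∉ Y := by
    have : Tendsto (fun w => z * nM w) (𝓝 (0 : ℂ)) (𝓝 (z * 1)) := by
      refine Tendsto.mul tendsto_const_nhds ?_
      apply tendsto_SL4 <;> simp only [nM00, nM01, nM10, nM11, one00, one01, one10, one11]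
      · exact tendsto_const_nhds
      · exact tendsto_const_nhds
      · exact tendsto_id
      · exact tendsto_const_nhds
    exact this.eventually (hY.isOpen_compl.mem_nhds (by simpa using hz))
  obtain ⟨ε, hε, hb⟩ := Metric.eventually_nhds_iff.1 hball
  obtain ⟨φ, γ, z', hφ, hγ, ht⟩ := hc.subseq (fun n => z * dg (n : ℝ))
  have hk : ∀ n, ∀ w : ℂ, ‖w‖ < ε * Real.exp (2 * φ n) → γ n * (z * dg (φ n : ℝ)) * nM w ∉ Y := by
    intro n w hw
    have e : γ n * (z * dg (φ n : ℝ)) * nM w =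
        γ n * (z * nM (Complex.exp (-(2 * (φ n : ℝ))) * w) * dg (φ n : ℝ)) := by
      have : dg (φ n : ℝ) * nM w = nM (Complex.exp (-(2 * (φ n : ℝ))) * w) * dg (φ n : ℝ) := by
        have h2 : Complex.exp (-(2 * (φ n : ℝ))) * Complex.exp ((φ n : ℝ)) =
            Complex.exp (-(φ n : ℝ)) := by
          rw [← Complex.exp_add]; congr 1; ring
        apply sl_ext <;>
          simp only [mul00, mul01, mul10, mul11, nM00, nM01, nM10, nM11, dg00, dg01, dg10, dg11]
        · ring
        · ring
        · linear_combination (-w) * h2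
        · ring
      simp only [mul_assoc, this]
    rw [e]
    refine lF _ (rF _ (hb ?_) _ (dg10 _)) _ (hγ n)
    rw [dist_zero_right, norm_mul, Complex.norm_exp]
    have : (-(2 * ((φ n : ℝ) : ℂ))).re = -(2 * (φ n : ℝ)) := by simp
    rw [this, Real.exp_neg, inv_mul_lt_iff₀ (Real.exp_pos _), mul_comm]
    exact hw
  have hbig : ∀ g : SL2C, g 0 0 ≠ 0 → z' * g ∉ Y := by
    intro g hg
    have h1 : Tendsto (fun n => (γ n * (z * dg (φ n : ℝ)))⁻¹ * (z' * g)) atTop (𝓝 g) := by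
      have := (ht.inv).mul_const (z' * g)
      simpa using this
    have h2 := tendsto_SL.1 h1
    have h3 := ((h2 1 0).div (h2 0 0) hg).norm
    have h4 : Tendsto (fun n => ε * Real.exp (2 * φ n)) atTop atTop := by
      refine Tendsto.const_mul_atTop hε (Real.tendsto_exp_atTop.comp ?_)
      exact (tendsto_natCast_atTop_atTop.comp hφ.tendsto_atTop).const_mul_atTop (by norm_num)
    obtain ⟨n, hn1, hn2, hn3⟩ := ((h3.eventually_lt_const (lt_add_one _)).and
      ((h4.eventually_ge_atTop (‖g 1 0 / g 0 0‖ + 1)).and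
        ((h2 0 0).eventually_ne hg))).exists
    obtain ⟨k, hkd⟩ : ∃ k, k = (γ n * (z * dg (φ n : ℝ)))⁻¹ * (z' * g) := ⟨_, rfl⟩
    have e1 : z' * g = γ n * (z * dg (φ n : ℝ)) * nM (k 1 0 / k 0 0) *
        ((nM (k 1 0 / k 0 0))⁻¹ * k) := by rw [hkd]; group
    rw [e1]
    rw [← hkd] at hn3
    have hn1' : ‖k 1 0 / k 0 0‖ < ‖g 1 0 / g 0 0‖ + 1 := by rw [hkd]; exact hn1
    refine rF _ (hk n _ (lt_of_lt_of_le hn1' hn2)) _ ?_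
    rw [mul10, inv10, inv11, nM10, nM00]
    field_simp
    ring
  obtain ⟨y, hy⟩ := hne
  have h0 : ∀ y ∈ Y, (z'⁻¹ * y) 0 0 = 0 := by
    intro y hy
    by_contra hcon
    exact hbig _ hcon (by simpa using hy)
  refine no_parab hc hd y fun δ hδ => ?_
  have e : y⁻¹ * δ * y = (z'⁻¹ * y)⁻¹ * (z'⁻¹ * (δ * y)) := by group
  rw [e, mul10, inv10, inv11, h0 y hy, h0 _ (hl _ hδ _ hy)]
  ring

/-- An element of `NgN` : diagonalising the upper row. -/
theorem double_coset (g : SL2C) (t : ℂ) (hg : g 1 0 ≠ 0) :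
    uMat ((Complex.exp t - g 0 0) / g 1 0) * g *
      uMat (-(g 0 1 + (Complex.exp t - g 0 0) / g 1 0 * g 1 1) * Complex.exp (-t)) =
    dg t * nM (Complex.exp t * g 1 0) := by
  have dp := sl_det g
  have h2 : Complex.exp t * Complex.exp (-t) = 1 := by rw [← Complex.exp_add]; simp
  have h3 : (Complex.exp t - g 0 0) / g 1 0 * g 1 0 = Complex.exp t - g 0 0 := by
    field_simp
  generalize (Complex.exp t - g 0 0) / g 1 0 = q at h3 ⊢
  apply sl_ext <;>
    simp only [mul00, mul01, mul10, mul11, nM00, nM01, nM10, nM11, dg00, dg01, dg10, dg11,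
      uM00, uM01, uM10, uM11]
  · linear_combination h3
  · linear_combination (-(g 0 1 + q * g 1 1) * Complex.exp (-t)) * h3 - (g 0 1 + q * g 1 1) * h2
  · linear_combination (-g 1 0) * h2
  · linear_combination (-g 1 1) * h2 + Complex.exp (-t) * dp
      - (g 1 1 * Complex.exp (-t)) * h3

theorem diag_ret {Λ : Subgroup SL2C} (hc : Coc Λ) {Y : Set SL2C} (hY : IsClosed Y)
    (hl : LInv Λ Y) (t : ℂ) {g : ℕ → SL2C} (hg : ∀ n, g n ∈ Ret Y Y)
    (hn : ∀ n, uMat ((Complex.exp t - g n 0 0) / g n 1 0) * g n *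
      uMat (-(g n 0 1 + (Complex.exp t - g n 0 0) / g n 1 0 * g n 1 1) * Complex.exp (-t)) ∈ Ret Y Y)
    (h1 : Tendsto g atTop (𝓝 1)) (h0 : ∀ n, g n 1 0 ≠ 0) : dg t ∈ Ret Y Y := by
  refine (Ret.closed hc hY hY hl hl).mem_of_tendsto (b := atTop) ?_ (Eventually.of_forall hn)
  simp only [double_coset _ t (h0 _)]
  suffices h : Tendsto (fun n => nM (Complex.exp t * g n 1 0)) atTop (𝓝 1) by
    have h' := h.const_mul (dg t)
    rwa [mul_one] at h'
  have h2 := tendsto_SL.1 h1 1 0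
  rw [one10] at h2
  have h3 := h2.const_mul (Complex.exp t)
  rw [mul_zero] at h3
  apply tendsto_SL4 <;> simp only [nM00, nM01, nM10, nM11, one00, one01, one10, one11]
  · exact tendsto_const_nhds
  · exact tendsto_const_nhds
  · exact h3
  · exact tendsto_const_nhds

open scoped Pointwise

/-- the group M, as a set -/
def MS : Set SL2C := (fun θ : ℝ => dg (θ * Complex.I)) '' Set.Icc (-Real.pi) Real.pi

theorem continuous_dg : Continuous dg := by
  rw [continuous_iff_continuousAt]
  intro t
  apply tendsto_SL4 <;> simp only [dg00, dg01, dg10, dg11]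
  · exact Complex.continuous_exp.continuousAt
  · exact tendsto_const_nhds
  · exact tendsto_const_nhds
  · exact (Complex.continuous_exp.comp continuous_neg).continuousAt

theorem MS_compact : IsCompact MS :=
  isCompact_Icc.image (continuous_dg.comp (by fun_prop))

theorem PS_decomp {q : SL2C} (hq : q 1 0 = 0) :
    ∃ l ∈ ANS, ∃ θ : ℝ, θ ∈ Set.Icc (-Real.pi) Real.pi ∧ q = l * dg (θ * Complex.I) := by
  have hd := sl_det q
  have hne : q 0 0 ≠ 0 := by
    intro h; rw [h, hq] at hd; simp at hd
  have e : (q * dg (-((q 0 0).arg * Complex.I))) 0 0 = (‖q 0 0‖ : ℂ) := by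
    rw [mul00, dg00, dg10]
    nth_rw 1 [← Complex.norm_mul_exp_arg_mul_I (q 0 0)]
    rw [mul_assoc, ← Complex.exp_add]; simp
  refine ⟨q * dg (-((q 0 0).arg * Complex.I)), ⟨?_, ?_, ?_⟩, (q 0 0).arg,
    ⟨(Complex.neg_pi_lt_arg _).le, Complex.arg_le_pi _⟩, ?_⟩
  · rw [mul10, dg10, hq]; ring
  · rw [e]; simp
  · rw [e]; simpa using hne
  · rw [mul_assoc, ← dg_add]; simp [dg_zero]

theorem uM_mem_ANS (z : ℂ) : uMat z ∈ ANS := by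
  refine ⟨uM10 z, ?_, ?_⟩ <;> simp [uM00]

theorem AN_full {Λ : Subgroup SL2C} (hc : Coc Λ) (hd : Dsc Λ) {Y : Set SL2C}
    (hY : IsMinSet Λ ANS Y) (z : SL2C) : z ∈ Y := by
  have hYM : ∀ z, ∃ y ∈ Y, ∃ θ : ℝ, θ ∈ Set.Icc (-Real.pi) Real.pi ∧ y * dg (θ * Complex.I) = z := by
    intro z
    have h := P_full hc hd (Y := Y * MS) (hY.cl.mul_right_of_isCompact MS_compact) ?_ ?_ ?_ z
    · obtain ⟨y, hy, m, ⟨θ, hθ, rfl⟩, e⟩ := h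
      exact ⟨y, hy, θ, hθ, e⟩
    · obtain ⟨y, hy⟩ := hY.ne
      exact ⟨_, y, hy, _, ⟨0, ⟨by linarith [Real.pi_pos], Real.pi_pos.le⟩, rfl⟩, rfl⟩
    · rintro γ hγ _ ⟨y, hy, m, hm, rfl⟩
      exact ⟨γ * y, hY.li γ hγ y hy, m, hm, by simp [mul_assoc]⟩
    · rintro _ ⟨y, hy, m, ⟨θ, hθ, rfl⟩, rfl⟩ p hp
      obtain ⟨l, hl, θ', hθ', e⟩ := PS_decomp (q := dg (θ * Complex.I) * p) (by
        have hp' : p 1 0 = 0 := hp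
        rw [mul10, dg10, hp']; ring)
      refine ⟨y * l, hY.ri y hy l hl, _, ⟨θ', hθ', rfl⟩, ?_⟩
      change y * l * dg (θ' * Complex.I) = y * dg (θ * Complex.I) * p
      rw [mul_assoc, ← e, mul_assoc]
  have hnorm : ∀ θ : ℝ, ∀ l ∈ ANS, ∃ l' ∈ ANS, l * dg (θ * Complex.I) = dg (θ * Complex.I) * l' := by
    rintro θ l ⟨h1, h2, h3⟩
    have e : ((dg (θ * Complex.I))⁻¹ * (l * dg (θ * Complex.I))) 0 0 = l 0 0 := by
      rw [← dg_neg, mul00, mul00, mul10, dg00, dg00, dg01, dg10]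
      have : Complex.exp (-(θ * Complex.I)) * Complex.exp (θ * Complex.I) = 1 := by
        rw [← Complex.exp_add]; simp
      linear_combination (l 0 0) * this
    refine ⟨(dg (θ * Complex.I))⁻¹ * (l * dg (θ * Complex.I)), ⟨?_, ?_, ?_⟩, by group⟩
    · rw [← dg_neg, mul10, mul00, mul10, dg10, dg10, h1]; ring
    · rw [e]; exact h2
    · rw [e]; exact h3
  have hstab : ∀ θ : ℝ, dg (θ * Complex.I) ∈ Ret Y Y → ∀ y ∈ Y, y * dg (θ * Complex.I) ∈ Y :=
    fun θ h => hY.norm_mem hY.cl hY.li hY.ri h (hnorm θ)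
  have hall : ∀ θ : ℝ, dg (θ * Complex.I) ∈ Ret Y Y := by
    intro θ0
    obtain ⟨y, hy⟩ := hY.ne
    choose yk hyk θk hθk ek using fun k : ℕ => hYM (y * nM ((1 / ((k : ℝ) + 1) : ℝ) : ℂ))
    obtain ⟨θ, -, φ, hφ, ht⟩ := isCompact_Icc.tendsto_subseq hθk
    have hw : Tendsto (fun k => nM ((1 / ((φ k : ℝ) + 1) : ℝ) : ℂ)) atTop (𝓝 1) := by
      have h0 : Tendsto (fun k => ((1 / ((φ k : ℝ) + 1) : ℝ) : ℂ)) atTop (𝓝 0) := by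
        have := (tendsto_one_div_add_atTop_nhds_zero_nat (𝕜 := ℝ)).comp hφ.tendsto_atTop
        have h2 := (Complex.continuous_ofReal.tendsto 0).comp this
        rw [Complex.ofReal_zero] at h2
        exact h2
      apply tendsto_SL4 <;> simp only [nM00, nM01, nM10, nM11, one00, one01, one10, one11]
      · exact tendsto_const_nhds
      · exact tendsto_const_nhds
      · exact h0
      · exact tendsto_const_nhds
    have hθ : Tendsto (fun k => dg (-((θk (φ k) : ℝ) * Complex.I))) atTop
        (𝓝 (dg (-(θ * Complex.I)))) := by
      have hcont : Continuous (fun x : ℝ => dg (-(x * Complex.I))) :=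
        continuous_dg.comp (by fun_prop)
      exact (hcont.tendsto θ).comp ht
    have eyk : ∀ k, yk k = y * nM ((1 / ((k : ℝ) + 1) : ℝ) : ℂ) * dg (-((θk k : ℝ) * Complex.I)) := by
      intro k
      rw [← ek k, mul_assoc, ← dg_add]; simp [dg_zero]
    have hlim : y * dg (-(θ * Complex.I)) ∈ Y := by
      have h2 := (hw.const_mul y).mul hθ
      rw [mul_one] at h2
      exact hY.cl.mem_of_tendsto h2 (Eventually.of_forall fun k => by rw [← eyk]; exact hyk _)
    have hret : dg (θ * Complex.I) ∈ Ret Y Y := by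
      have : dg (-(θ * Complex.I)) ∈ Ret Y Y := ⟨y, hy, hlim⟩
      have := Ret.inv_mem this
      rwa [dg_neg, inv_inv] at this
    have hst := hstab θ hret
    have hg : ∀ k, nM ((1 / ((φ k : ℝ) + 1) : ℝ) : ℂ) * dg (-((θk (φ k) : ℝ) * Complex.I)) *
        dg (θ * Complex.I) ∈ Ret Y Y := by
      intro k
      refine ⟨y, hy, ?_⟩
      have := hst _ (hyk (φ k))
      rw [eyk] at this
      simpa only [mul_assoc] using this
    refine diag_ret hc hY.cl hY.li (θ0 * Complex.I) hg (fun n => ?_) ?_ ?_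
    · refine Ret.rmul hY.ri (Ret.lmul hY.ri (hg n) ?_) (uM_mem_ANS _)
      rw [← uM_neg]; exact uM_mem_ANS _
    · have h2 := (hw.mul hθ).mul_const (dg (θ * Complex.I))
      have e : (1 : SL2C) * dg (-(θ * Complex.I)) * dg (θ * Complex.I) = 1 := by
        rw [one_mul, ← dg_add]; simp [dg_zero]
      rwa [e] at h2
    · intro k
      rw [mul10, mul10, mul11, dg00, dg00, dg10, dg10, nM10]
      simp only [mul_zero, add_zero]
      refine mul_ne_zero (mul_ne_zero ?_ (Complex.exp_ne_zero _)) (Complex.exp_ne_zero _)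
      have : (1 / ((φ k : ℝ) + 1) : ℝ) ≠ 0 := by positivity
      exact_mod_cast this
  obtain ⟨y, hy, θ, -, rfl⟩ := hYM z
  exact hstab θ (hall θ) y hy

theorem closed_AN_full {Λ : Subgroup SL2C} (hc : Coc Λ) (hd : Dsc Λ) {X : Set SL2C}
    (hX : IsClosed X) (hl : LInv Λ X) {z : SL2C} (hz : ∀ p ∈ ANS, z * p ∈ X) (g : SL2C) :
    g ∈ X := by
  obtain ⟨D, hD⟩ : ∃ D : Set SL2C, D = {x | ∃ γ ∈ Λ, ∃ p ∈ ANS, x = γ * (z * p)} := ⟨_, rfl⟩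
  have hDX : closure D ⊆ X := by
    refine closure_minimal ?_ hX
    rw [hD]
    rintro _ ⟨γ, hγ, p, hp, rfl⟩
    exact hl _ hγ _ (hz p hp)
  have hmul : ∀ p ∈ ANS, ∀ q ∈ ANS, p * q ∈ ANS := by
    rintro p ⟨p1, p2, p3⟩ q ⟨q1, q2, q3⟩
    have e : (p * q) 0 0 = p 0 0 * q 0 0 := by rw [mul00, q1]; ring
    refine ⟨by rw [mul10, p1, q1]; ring, ?_, ?_⟩
    · rw [e, Complex.mul_im, p2, q2]; ring
    · rw [e, Complex.mul_re, p2, q2]; simpa using mul_pos p3 q3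
  obtain ⟨Y, hYD, hY⟩ := exists_min (Λ := Λ) hc (L := ANS) (X := closure D) isClosed_closure
    (by
      refine ⟨z, subset_closure ?_⟩
      rw [hD]
      exact ⟨1, Λ.one_mem, 1, ⟨one10, by simp, by simp⟩, by simp⟩)
    (by
      intro γ hγ y hy
      refine map_mem_closure (continuous_const_mul γ) hy ?_
      rw [hD]
      rintro _ ⟨δ, hδ, p, hp, rfl⟩
      exact ⟨γ * δ, Λ.mul_mem hγ hδ, p, hp, by group⟩)
    (by
      intro y hy p hp
      refine map_mem_closure (f := fun x => x * p) (continuous_mul_const p) hy ?_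
      rw [hD]
      rintro _ ⟨δ, hδ, q, hq, rfl⟩
      exact ⟨δ, hδ, q * p, hmul _ hq _ hp, by group⟩)
  exact hDX (hYD (AN_full hc hd hY g))

/-! ### The subgroup of real matrices -/

/-- real matrices -/
def HS : Set SL2C := {g | ∀ i j, (g i j).im = 0}
/-- real upper unipotent matrices -/
def US : Set SL2C := Set.range (fun t : ℝ => uMat t)
/-- imaginary upper unipotent -/
def vI (s : ℝ) : SL2C := uMat (s * Complex.I)

theorem HS_mk {g : SL2C} (h00 : (g 0 0).im = 0) (h01 : (g 0 1).im = 0) (h10 : (g 1 0).im = 0)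
    (h11 : (g 1 1).im = 0) : g ∈ HS := by
  intro i j
  fin_cases i <;> fin_cases j <;> assumption

theorem HS_inv {g : SL2C} (h : g ∈ HS) : g⁻¹ ∈ HS := by
  apply HS_mk
  · rw [inv00]; exact h 1 1
  · rw [inv01, Complex.neg_im, h 0 1, neg_zero]
  · rw [inv10, Complex.neg_im, h 1 0, neg_zero]
  · rw [inv11]; exact h 0 0

theorem HS_mul {g k : SL2C} (hg : g ∈ HS) (hk : k ∈ HS) : g * k ∈ HS := by
  apply HS_mk <;> simp only [mul00, mul01, mul10, mul11, Complex.add_im, Complex.mul_im,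
    hg 0 0, hg 0 1, hg 1 0, hg 1 1, hk 0 0, hk 0 1, hk 1 0, hk 1 1] <;> ring

theorem uM_mem_US (t : ℝ) : uMat t ∈ US := ⟨t, rfl⟩
theorem uM_inv_mem_US (t : ℝ) : (uMat t)⁻¹ ∈ US := ⟨-t, by rw [← uM_neg]; push_cast; rfl⟩
theorem US_sub_HS : US ⊆ HS := by
  rintro _ ⟨t, rfl⟩
  apply HS_mk <;> simp [uM00, uM01, uM10, uM11]
theorem dg_mem_HS (t : ℝ) : dg t ∈ HS := by
  have h : ∀ x : ℝ, (Complex.exp x).im = 0 := fun x => by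
    rw [← Complex.ofReal_exp]; simp
  apply HS_mk
  · rw [dg00]; exact h t
  · rw [dg01]; simp
  · rw [dg10]; simp
  · rw [dg11, ← Complex.ofReal_neg]; exact h (-t)
theorem vI_add (s t : ℝ) : vI (s + t) = vI s * vI t := by
  unfold vI; rw [← uM_add]; congr 1; push_cast; ring
theorem vI_zero : vI 0 = 1 := by
  unfold vI; simp [uM_zero]
theorem vI_comm (s : ℝ) : ∀ l ∈ US, ∃ l' ∈ US, l * vI s = vI s * l' := by
  rintro _ ⟨t, rfl⟩
  refine ⟨uMat t, ⟨t, rfl⟩, ?_⟩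
  change uMat t * vI s = vI s * uMat t
  unfold vI; rw [← uM_add, ← uM_add, add_comm]
theorem continuous_uM : Continuous uMat := by
  rw [continuous_iff_continuousAt]
  intro t
  apply tendsto_SL4 <;> simp only [uM00, uM01, uM10, uM11]
  · exact tendsto_const_nhds
  · exact tendsto_id
  · exact tendsto_const_nhds
  · exact tendsto_const_nhds
theorem continuous_vI : Continuous vI := continuous_uM.comp (by fun_prop)

/-- Half-line conclusion. -/
def Half (Y X : Set SL2C) : Prop :=
  ∃ ε : ℝ, (ε = 1 ∨ ε = -1) ∧ ∀ s : ℝ, 0 ≤ s → vI (ε * s) ∈ Ret Y X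

theorem half_AN {Λ : Subgroup SL2C} (hc : Coc Λ) {Y X : Set SL2C}
    (hY : IsMinSet Λ US Y) (hX : IsClosed X) (lX : LInv Λ X) (rX : RInv HS X)
    (h : Half Y X) : ∃ z, ∀ p ∈ ANS, z * p ∈ X := by
  obtain ⟨ε, hε, hs⟩ := h
  have hst : ∀ s : ℝ, 0 ≤ s → ∀ y ∈ Y, y * vI (ε * s) ∈ X := fun s h0 =>
    hY.norm_mem hX lX (fun y hy l hl => rX y hy l (US_sub_HS hl)) (hs s h0) (vI_comm _)
  have hεε : ε * ε = 1 := by rcases hε with rfl | rfl <;> norm_num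
  obtain ⟨y, hy⟩ := hY.ne
  obtain ⟨φ, γ, z, hφ, hγ, ht⟩ := hc.subseq (fun n => y * vI (ε * (n : ℝ)))
  have hz : ∀ r : ℝ, z * vI r ∈ X := by
    intro r
    refine hX.mem_of_tendsto (ht.mul_const (vI r)) ?_
    have h1 : Tendsto (fun n => ((φ n : ℕ) : ℝ)) atTop atTop :=
      tendsto_natCast_atTop_atTop.comp hφ.tendsto_atTop
    filter_upwards [h1.eventually_ge_atTop (-(ε * r))] with n hn
    have e : γ n * (y * vI (ε * (φ n : ℝ))) * vI r = γ n * (y * vI (ε * ((φ n : ℝ) + ε * r))) := by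
      have : ε * ((φ n : ℝ) + ε * r) = ε * (φ n : ℝ) + r := by linear_combination r * hεε
      rw [this, vI_add]; group
    rw [e]
    exact lX _ (hγ n) _ (hst _ (by linarith) y hy)
  refine ⟨z, ?_⟩
  rintro p ⟨p1, p2, p3⟩
  have hd := sl_det p
  rw [p1, mul_zero, sub_zero] at hd
  have hre := congrArg Complex.re hd
  have him := congrArg Complex.im hd
  rw [Complex.mul_re, p2] at hre
  rw [Complex.mul_im, p2] at him
  simp only [zero_mul, sub_zero, add_zero, Complex.one_re, Complex.one_im] at hre him
  have p11 : (p 1 1).im = 0 := by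
    rcases mul_eq_zero.1 him with h | h
    · exact absurd h p3.ne'
    · exact h
  obtain ⟨r, hr⟩ : ∃ r : ℝ, r = (p 0 0).re * (p 0 1).im := ⟨_, rfl⟩
  have e : z * p = z * vI r * (vI (-r) * p) := by
    have : vI r * vI (-r) = 1 := by rw [← vI_add]; simp [vI_zero]
    calc z * p = z * (vI r * vI (-r)) * p := by rw [this, mul_one]
      _ = _ := by group
  rw [e]
  refine rX _ (hz r) _ ?_
  unfold vI
  apply HS_mk <;> simp only [mul00, mul01, mul10, mul11, uM00, uM01, uM10, uM11, p1]
  · simp [p2]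
  · simp [hr]
    linear_combination (-(p 0 1).im) * hre
  · simp
  · simp [p11]

theorem recur {Λ : Subgroup SL2C} (hc : Coc Λ) (hd : Dsc Λ) {Y : Set SL2C}
    (hne : Y.Nonempty) (hl : LInv Λ Y) (hr : RInv US Y) :
    ∃ᶠ g in 𝓝 (1 : SL2C), g ∈ Ret Y Y ∧ g ∉ US := by
  obtain ⟨y, hy⟩ := hne
  obtain ⟨φ, γ, z, hφ, hγ, ht⟩ := hc.subseq (fun n => y * uMat ((n : ℝ) : ℂ))
  have ht1 := ht.comp (tendsto_add_atTop_nat 1)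
  have h1 := ht.inv.mul ht1
  rw [inv_mul_cancel] at h1
  have hmem : ∀ n, γ n * (y * uMat ((φ n : ℝ) : ℂ)) ∈ Y := fun n =>
    hl _ (hγ n) _ (hr _ hy _ (uM_mem_US _))
  have hsmall := (tendsto_SL.1 h1 0 1)
  rw [one01] at hsmall
  have hsmall' := hsmall.norm
  rw [norm_zero] at hsmall'
  refine h1.frequently (Eventually.frequently ?_)
  filter_upwards [hsmall'.eventually_lt_const (zero_lt_one)] with n hn
  refine ⟨⟨_, hmem n, ?_⟩, ?_⟩
  · simp only [mul_inv_cancel_left]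
    exact hmem (n + 1)
  · rintro ⟨r, hr'⟩
    simp only [Function.comp] at hr' hn
    rw [← hr', uM01] at hn
    have e : y * uMat (((φ (n + 1) : ℝ) - r - (φ n : ℝ) : ℝ) : ℂ) * y⁻¹ = (γ (n + 1))⁻¹ * γ n := by
      have e0 : uMat (((φ (n + 1) : ℝ) - r - (φ n : ℝ) : ℝ) : ℂ) =
          uMat ((φ (n + 1) : ℝ) : ℂ) * (uMat (r : ℂ))⁻¹ * (uMat ((φ n : ℝ) : ℂ))⁻¹ := by
        rw [← uM_neg, ← uM_neg, ← uM_add, ← uM_add]; congr 1; push_cast; ring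
      rw [e0, hr']
      group
    have h3 := no_unip hc hd (y := y) (w := (((φ (n + 1) : ℝ) - r - (φ n : ℝ) : ℝ) : ℂ)) (by
      rw [e]; exact Λ.mul_mem (Λ.inv_mem (hγ _)) (hγ _))
    have h4 : (φ (n + 1) : ℝ) - r - (φ n : ℝ) = 0 := by exact_mod_cast h3
    have h5 : (φ n : ℝ) + 1 ≤ φ (n + 1) := by exact_mod_cast hφ (Nat.lt_succ_self n)
    rw [Complex.norm_real, Real.norm_eq_abs] at hn
    linarith [le_abs_self r]

/-! ### Transversal displacement -/

/-- normal form of a matrix modulo real matrices -/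
def Form (p : SL2C) : Prop :=
  (p 1 1).re = (p 0 0).re ∧ (p 1 1).im = -(p 0 0).im ∧ (p 0 1).re = 0 ∧ (p 1 0).re = 0

/-- auxiliary determinant -/
def rho (g : SL2C) : ℝ := (g 0 0).re * (g 1 1).re - (g 0 1).re * (g 1 0).re

theorem continuous_rho : Continuous rho := by
  have h : ∀ i j, Continuous (fun g : SL2C => (g i j).re) := fun i j =>
    Complex.continuous_re.comp (continuous_entry i j)
  exact ((h 0 0).mul (h 1 1)).sub ((h 0 1).mul (h 1 0))

open Classical in
/-- correction by a real matrix -/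
def hf (g : SL2C) : SL2C :=
  if hρ : 0 < rho g then
    slm ((((g 1 1).re / √(rho g) : ℝ)) : ℂ) (((-(g 0 1).re / √(rho g) : ℝ)) : ℂ)
      (((-(g 1 0).re / √(rho g) : ℝ)) : ℂ) ((((g 0 0).re / √(rho g) : ℝ)) : ℂ) (by
        have h1 : √(rho g) * √(rho g) = rho g := Real.mul_self_sqrt hρ.le
        have h2 : √(rho g) ≠ 0 := (Real.sqrt_pos.2 hρ).ne'
        norm_cast
        field_simp
        rw [pow_two, h1]; unfold rho; ring)
  else 1

theorem hf_pos : ∀ᶠ g in 𝓝 (1 : SL2C), 0 < rho g := by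
  refine continuous_rho.continuousAt.eventually_const_lt ?_
  unfold rho; simp

theorem hf_good : ∀ᶠ g in 𝓝 (1 : SL2C), hf g ∈ HS ∧ Form (g * hf g) := by
  filter_upwards [hf_pos] with g hg
  have hd := sl_det g
  have him := congrArg Complex.im hd
  simp only [Complex.sub_im, Complex.mul_im, Complex.one_im] at him
  unfold hf
  rw [dif_pos hg]
  constructor
  · apply HS_mk <;> simp only [slm00, slm01, slm10, slm11, Complex.ofReal_im]
  · refine ⟨?_, ?_, ?_, ?_⟩ <;>
      simp only [mul00, mul01, mul10, mul11, slm00, slm01, slm10, slm11, Complex.add_re,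
        Complex.add_im, Complex.mul_re, Complex.mul_im, Complex.ofReal_re, Complex.ofReal_im]
    · ring
    · linear_combination (1 / √(rho g)) * him
    · ring
    · ring

theorem hf_tendsto : Tendsto hf (𝓝 1) (𝓝 1) := by
  have h : ∀ i j, Tendsto (fun g : SL2C => (g i j).re) (𝓝 1) (𝓝 (((1 : SL2C) i j).re)) := fun i j =>
    (Complex.continuous_re.comp (continuous_entry i j)).continuousAt
  have hs : Tendsto (fun g => √(rho g)) (𝓝 (1 : SL2C)) (𝓝 1) := by
    have := (Real.continuous_sqrt.comp continuous_rho).tendsto (1 : SL2C)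
    have e : (Real.sqrt ∘ rho) 1 = 1 := by simp [rho]
    rwa [e] at this
  have hq : ∀ {f : SL2C → ℝ} {a : ℝ}, Tendsto f (𝓝 1) (𝓝 a) →
      Tendsto (fun g => (((f g / √(rho g) : ℝ)) : ℂ)) (𝓝 1) (𝓝 (a : ℂ)) := by
    intro f a hfa
    have := (hfa.div hs one_ne_zero)
    rw [div_one] at this
    exact (Complex.continuous_ofReal.tendsto a).comp this
  apply tendsto_SL4
  · refine ((hq (h 1 1)).congr' ?_).trans (by simp)
    filter_upwards [hf_pos] with g hg
    unfold hf; rw [dif_pos hg]; rfl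
  · refine ((hq (h 0 1).neg).congr' ?_).trans (by simp)
    filter_upwards [hf_pos] with g hg
    unfold hf; rw [dif_pos hg]; rfl
  · refine ((hq (h 1 0).neg).congr' ?_).trans (by simp)
    filter_upwards [hf_pos] with g hg
    unfold hf; rw [dif_pos hg]; rfl
  · refine ((hq (h 0 0)).congr' ?_).trans (by simp)
    filter_upwards [hf_pos] with g hg
    unfold hf; rw [dif_pos hg]; rfl

theorem quad_aux {A B c : ℝ} (hA : 0 ≤ A) (hB : 0 ≤ B) (hAB : 0 < A + B) (hc : 0 ≤ c) :
    ∃ t : ℝ, 0 ≤ t ∧ A * t ^ 2 + B * t = c := by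
  have hT : (0 : ℝ) ≤ 1 + c / (A + B) := by positivity
  have hcont : ContinuousOn (fun t : ℝ => A * t ^ 2 + B * t) (Set.Icc 0 (1 + c / (A + B))) := by
    fun_prop
  have h := intermediate_value_Icc hT hcont
  obtain ⟨t, ht, e⟩ := h (show c ∈ _ by
    refine ⟨by simpa using hc, ?_⟩
    have h1 : (A + B) * (c / (A + B)) = c := by field_simp
    have h2 : 0 ≤ c / (A + B) := by positivity
    generalize c / (A + B) = q at h1 h2
    nlinarith [mul_nonneg hA h2, mul_nonneg hA (mul_nonneg h2 h2)])
  exact ⟨t, ht.1, e⟩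

theorem quad {β γ δ : ℝ} (h : γ ≠ 0 ∨ δ ≠ 0) : ∃ ε : ℝ, (ε = 1 ∨ ε = -1) ∧
    ∀ s : ℝ, |β| ≤ s → ∃ t : ℝ, β - 2 * t * δ - t ^ 2 * γ = ε * s ∧
      (t * γ) ^ 2 ≤ (s + |β|) * |γ| := by
  rcases lt_trichotomy γ 0 with hγ | hγ | hγ
  · refine ⟨1, Or.inl rfl, fun s hs => ?_⟩
    have hb := abs_le.1 hs
    have hb' := neg_abs_le β
    obtain ⟨t, ht, e⟩ := quad_aux (A := -γ) (B := 2 * |δ|) (c := s - β) (by linarith)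
      (by positivity) (by linarith [abs_nonneg δ]) (by linarith)
    have hbd : (t * γ) ^ 2 ≤ (s + |β|) * |γ| := by
      rw [abs_of_neg hγ]
      have : -γ * t ^ 2 ≤ s + |β| := by nlinarith [mul_nonneg (abs_nonneg δ) ht]
      nlinarith
    rcases le_total 0 δ with hδ | hδ
    · rw [abs_of_nonneg hδ] at e
      exact ⟨-t, by linarith, by simpa using hbd⟩
    · rw [abs_of_nonpos hδ] at e
      exact ⟨t, by linarith, hbd⟩
  · refine ⟨1, Or.inl rfl, fun s hs => ?_⟩
    have hδ : δ ≠ 0 := by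
      rcases h with h | h
      · exact absurd hγ h
      · exact h
    refine ⟨(β - s) / (2 * δ), ?_, by simp [hγ]⟩
    rw [hγ]; field_simp; ring
  · refine ⟨-1, Or.inr rfl, fun s hs => ?_⟩
    have hb := abs_le.1 hs
    have hb' := le_abs_self β
    obtain ⟨t, ht, e⟩ := quad_aux (A := γ) (B := 2 * |δ|) (c := s + β) (by linarith)
      (by positivity) (by linarith [abs_nonneg δ]) (by linarith)
    have hbd : (t * γ) ^ 2 ≤ (s + |β|) * |γ| := by
      rw [abs_of_pos hγ]
      have : γ * t ^ 2 ≤ s + |β| := by nlinarith [mul_nonneg (abs_nonneg δ) ht]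
      nlinarith
    rcases le_total 0 δ with hδ | hδ
    · rw [abs_of_nonneg hδ] at e
      exact ⟨t, by linarith, hbd⟩
    · rw [abs_of_nonpos hδ] at e
      exact ⟨-t, by linarith, by simpa using hbd⟩

theorem caseI {Λ : Subgroup SL2C} (hc : Coc Λ) {Y X : Set SL2C}
    (hY : IsMinSet Λ US Y) (hX : IsClosed X) (lX : LInv Λ X) (rX : RInv HS X) (hYX : Y ⊆ X)
    (h : ∃ᶠ p in 𝓝 (1 : SL2C), p ∈ Ret Y X ∧ Form p ∧ ((p 1 0).im ≠ 0 ∨ (p 0 0).im ≠ 0)) :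
    Half Y X := by
  have hcl := Ret.closed hc hY.cl hX hY.li lX
  have key : ∀ ε : ℝ, (∃ᶠ p in 𝓝 (1 : SL2C), p ∈ Ret Y X ∧ Form p ∧ 
      ∀ s : ℝ, |(p 0 1).im| ≤ s → ∃ t : ℝ,
        (p 0 1).im - 2 * t * (p 0 0).im - t ^ 2 * (p 1 0).im = ε * s ∧
      (t * (p 1 0).im) ^ 2 ≤ (s + |(p 0 1).im|) * |(p 1 0).im|) →
      ∀ s : ℝ, 0 ≤ s → vI (ε * s) ∈ Ret Y X := by
    intro ε hfr s hs
    rcases hs.eq_or_lt with rfl | hs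
    · rw [mul_zero, vI_zero]
      obtain ⟨y, hy⟩ := hY.ne
      exact ⟨y, hy, by simpa using hYX hy⟩
    obtain ⟨p, hp1, hp⟩ := exists_seq_forall_of_frequently hfr
    have hE := tendsto_SL.1 hp1
    have hI : ∀ i j, Tendsto (fun n => (p n i j).im) atTop (𝓝 (((1 : SL2C) i j).im)) := fun i j =>
      (Complex.continuous_im.tendsto _).comp (hE i j)
    have hb0 : Tendsto (fun n => |(p n 0 1).im|) atTop (𝓝 0) := by
      have := (hI 0 1).abs; simpa using this
    have hg0 : Tendsto (fun n => |(p n 1 0).im|) atTop (𝓝 0) := by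
      have := (hI 1 0).abs; simpa using this
    have hch : ∀ n, ∃ t : ℝ, |(p n 0 1).im| ≤ s →
        (p n 0 1).im - 2 * t * (p n 0 0).im - t ^ 2 * (p n 1 0).im = ε * s ∧
        (t * (p n 1 0).im) ^ 2 ≤ (s + |(p n 0 1).im|) * |(p n 1 0).im| := by
      intro n
      by_cases hn : |(p n 0 1).im| ≤ s
      · obtain ⟨t, ht⟩ := (hp n).2.2 s hn
        exact ⟨t, fun _ => ht⟩
      · exact ⟨0, fun h => absurd h hn⟩
    choose t ht using hch
    have hev : ∀ᶠ n in atTop, |(p n 0 1).im| ≤ s :=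
      (hb0.eventually_lt_const hs).mono fun n hn => hn.le
    have hsq : Tendsto (fun n => (t n * (p n 1 0).im) ^ 2) atTop (𝓝 0) := by
      refine squeeze_zero' (Eventually.of_forall fun n => sq_nonneg _)
        (hev.mono fun n hn => (ht n hn).2) ?_
      have := (hb0.const_add s).mul hg0
      simpa using this
    have htg : Tendsto (fun n => t n * (p n 1 0).im) atTop (𝓝 0) := by
      have := hsq.sqrt
      simp only [Real.sqrt_sq_eq_abs, Real.sqrt_zero] at this
      exact (tendsto_zero_iff_abs_tendsto_zero _).2 this
    have hp10 : ∀ n, p n 1 0 = ((p n 1 0).im : ℂ) * Complex.I := fun n => by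
      apply Complex.ext
      · simpa using (hp n).2.1.2.2.2
      · simp
    have htg' : Tendsto (fun n => (t n : ℂ) * p n 1 0) atTop (𝓝 0) := by
      have := ((Complex.continuous_ofReal.tendsto 0).comp htg).mul_const Complex.I
      rw [Complex.ofReal_zero, zero_mul] at this
      refine this.congr fun n => ?_
      rw [hp10 n]; simp [mul_assoc]
    have hlim : Tendsto (fun n => uMat (t n) * p n * (uMat (t n))⁻¹) atTop (𝓝 (vI (ε * s))) := by
      unfold vI
      apply tendsto_SL4 <;> simp only [uM00, uM01, uM10, uM11]
      · have h2 := (hE 0 0).add htg'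
        rw [one00, add_zero] at h2
        refine h2.congr fun n => ?_
        simp only [mul00, mul01, inv00, inv10, uM00, uM01, uM10, uM11]; ring
      · refine tendsto_const_nhds.congr' ?_
        filter_upwards [hev] with n hn
        simp only [mul00, mul01, inv01, inv11, uM00, uM01]
        obtain ⟨f1, f2, f3, f4⟩ := (hp n).2.1
        have e := (ht n hn).1
        rw [← e]
        apply Complex.ext
        · simp [f1, f3, f4, pow_two]
          ring
        · simp [f2, pow_two]
          ring
      · have h2 := hE 1 0
        rw [one10] at h2
        refine h2.congr fun n => ?_
        simp only [mul10, mul11, inv00, inv10, uM00, uM10, uM11]; ring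
      · have h2 := (hE 1 1).sub htg'
        rw [one11, sub_zero] at h2
        refine h2.congr fun n => ?_
        simp only [mul10, mul11, inv01, inv11, uM00, uM01, uM10, uM11]; ring
    refine hcl.mem_of_tendsto hlim (Eventually.of_forall fun n => ?_)
    exact Ret.rmul rX (Ret.lmul hY.ri (hp n).1 (uM_inv_mem_US _)) (US_sub_HS (uM_inv_mem_US _))
  have h2 : ∃ᶠ p in 𝓝 (1 : SL2C), (p ∈ Ret Y X ∧ Form p ∧ 
      ∀ s : ℝ, |(p 0 1).im| ≤ s → ∃ t : ℝ,
        (p 0 1).im - 2 * t * (p 0 0).im - t ^ 2 * (p 1 0).im = 1 * s ∧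
      (t * (p 1 0).im) ^ 2 ≤ (s + |(p 0 1).im|) * |(p 1 0).im|) ∨ (p ∈ Ret Y X ∧ Form p ∧ 
      ∀ s : ℝ, |(p 0 1).im| ≤ s → ∃ t : ℝ,
        (p 0 1).im - 2 * t * (p 0 0).im - t ^ 2 * (p 1 0).im = (-1) * s ∧
      (t * (p 1 0).im) ^ 2 ≤ (s + |(p 0 1).im|) * |(p 1 0).im|) := by
    refine h.mono ?_
    rintro p ⟨p1, p2, p3⟩
    obtain ⟨ε, rfl | rfl, hε⟩ := quad (β := (p 0 1).im) p3
    · exact Or.inl ⟨p1, p2, hε⟩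
    · exact Or.inr ⟨p1, p2, hε⟩
  rcases frequently_or_distrib.1 h2 with h3 | h3
  · exact ⟨1, Or.inl rfl, key 1 h3⟩
  · exact ⟨-1, Or.inr rfl, key (-1) h3⟩

/-! ### The case of vertical displacement -/

theorem dg_norm (t : ℝ) : ∀ l ∈ US, ∃ l' ∈ US, l * dg t = dg t * l' := by
  rintro _ ⟨r, rfl⟩
  refine ⟨_, uM_mem_US (Real.exp (-(2 * t)) * r), ?_⟩
  change uMat (r : ℂ) * dg t = _
  rw [dg_uM]
  congr 2
  push_cast
  rw [← mul_assoc, ← Complex.exp_add]; simp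

theorem dg_vI (t s : ℝ) : dg t * vI s = vI (Real.exp (2 * t) * s) * dg t := by
  unfold vI
  rw [dg_uM]
  congr 2
  push_cast; ring

theorem half_of_dg {Λ : Subgroup SL2C} {Y X : Set SL2C}
    (hY : IsMinSet Λ US Y) (rX : RInv HS X) (hYX : Y ⊆ X)
    {s₀ : ℝ} (hs₀ : s₀ ≠ 0) (h : vI s₀ ∈ Ret Y X) (hdg : ∀ t : ℝ, dg t ∈ Ret Y Y) : Half Y X := by
  obtain ⟨ε, hε, hes⟩ : ∃ ε : ℝ, (ε = 1 ∨ ε = -1) ∧ ε * |s₀| = s₀ := by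
    rcases le_total 0 s₀ with h0 | h0
    · exact ⟨1, Or.inl rfl, by rw [abs_of_nonneg h0]; ring⟩
    · exact ⟨-1, Or.inr rfl, by rw [abs_of_nonpos h0]; ring⟩
  refine ⟨ε, hε, fun r hr => ?_⟩
  rcases hr.eq_or_lt with rfl | hr
  · rw [mul_zero, vI_zero]
    obtain ⟨y, hy⟩ := hY.ne
    exact ⟨y, hy, by simpa using hYX hy⟩
  have hpos : 0 < |s₀| := abs_pos.2 hs₀
  obtain ⟨t, ht⟩ : ∃ t : ℝ, Real.exp (2 * t) = r / |s₀| :=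
    ⟨Real.log (r / |s₀|) / 2, by rw [mul_div_cancel₀ _ two_ne_zero, Real.exp_log (by positivity)]⟩
  have e : Real.exp (2 * t) * s₀ = ε * r := by
    rw [ht]; nth_rewrite 2 [← hes]; field_simp
  have e2 := dg_vI t s₀
  rw [e] at e2
  obtain ⟨y, hy, hyv⟩ := h
  have hst := hY.norm_mem hY.cl hY.li hY.ri (hdg (-t)) (dg_norm (-t)) y hy
  refine ⟨_, hst, ?_⟩
  have e3 : y * dg ((-t : ℝ) : ℂ) * vI (ε * r) = y * vI s₀ * dg ((-t : ℝ) : ℂ) := by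
    have : dg ((-t : ℝ) : ℂ) = (dg t)⁻¹ := by rw [← dg_neg]; push_cast; rfl
    rw [this]
    have h4 : vI (ε * r) = dg t * vI s₀ * (dg t)⁻¹ := by rw [e2]; group
    rw [h4]; group
  rw [e3]
  exact rX _ hyv _ (dg_mem_HS _)

theorem dgs_a {Λ : Subgroup SL2C} (hc : Coc Λ) {Y : Set SL2C} (hY : IsMinSet Λ US Y)
    (h : ∃ᶠ g in 𝓝 (1 : SL2C), g ∈ Ret Y Y ∧ hf g ∈ HS ∧ (∃ s : ℝ, g * hf g = vI s) ∧ g 1 0 ≠ 0)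
    (t : ℝ) : dg t ∈ Ret Y Y := by
  obtain ⟨g, hg1, hg⟩ := exists_seq_forall_of_frequently h
  have hh : Tendsto (fun n => (hf (g n))⁻¹) atTop (𝓝 1) := by
    have := (hf_tendsto.comp hg1).inv
    rwa [inv_one] at this
  have hw : Tendsto (fun n => g n * hf (g n)) atTop (𝓝 1) := by
    have := hg1.mul (hf_tendsto.comp hg1)
    rwa [mul_one] at this
  have hn0 : Tendsto (fun n => nM (Complex.exp t * ((hf (g n))⁻¹ 1 0))) atTop (𝓝 1) := by
    have h2 := (tendsto_SL.1 hh 1 0).const_mul (Complex.exp t)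
    rw [one10, mul_zero] at h2
    apply tendsto_SL4 <;> simp only [nM00, nM01, nM10, nM11, one00, one01, one10, one11]
    · exact tendsto_const_nhds
    · exact tendsto_const_nhds
    · exact h2
    · exact tendsto_const_nhds
  have hlim := hw.mul (hn0.const_mul (dg t))
  rw [one_mul, mul_one] at hlim
  refine (Ret.closed hc hY.cl hY.cl hY.li hY.li).mem_of_tendsto hlim (Eventually.of_forall fun n => ?_)
  obtain ⟨hR, hH, ⟨s, hs⟩, h10⟩ := hg n
  obtain ⟨k, hk⟩ : ∃ k, k = (hf (g n))⁻¹ := ⟨_, rfl⟩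
  have hkH : k ∈ HS := hk ▸ HS_inv hH
  have eg : g n = vI s * k := by rw [hk, ← hs]; group
  have ek10 : k 1 0 ≠ 0 := by
    have : g n 1 0 = k 1 0 := by rw [eg, mul10]; unfold vI; rw [uM10, uM11]; ring
    rwa [← this]
  rw [hs, ← hk, ← double_coset k t ek10]
  have hre : ∀ i j, k i j = (((k i j).re : ℝ) : ℂ) := fun i j => by
    apply Complex.ext <;> simp [hkH i j]
  obtain ⟨q, hq⟩ : ∃ q : ℝ, (Complex.exp t - k 0 0) / k 1 0 = (q : ℂ) :=
    ⟨(Real.exp t - (k 0 0).re) / (k 1 0).re, by rw [hre 0 0, hre 1 0]; push_cast; simp⟩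
  obtain ⟨q', hq'⟩ : ∃ q' : ℝ, -(k 0 1 + (q : ℂ) * k 1 1) * Complex.exp (-t) = (q' : ℂ) :=
    ⟨-((k 0 1).re + q * (k 1 1).re) * Real.exp (-t), by rw [hre 0 1, hre 1 1]; push_cast; simp⟩
  rw [hq, hq']
  have e : vI s * (uMat q * k * uMat q') = uMat q * g n * uMat q' := by
    rw [eg]
    have : vI s * uMat q = uMat q * vI s := by unfold vI; rw [← uM_add, ← uM_add, add_comm]
    calc _ = vI s * uMat q * k * uMat q' := by group
      _ = _ := by rw [this]; group
  rw [e]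
  exact Ret.rmul hY.ri (Ret.lmul hY.ri hR (uM_inv_mem_US _)) (uM_mem_US _)

theorem tri_real {g : SL2C} (h10 : g 1 0 = 0) (him : (g 0 0).im = 0) (hpos : 0 < (g 0 0).re) :
    g * uMat ((-(g 0 1).re / (g 0 0).re : ℝ) : ℂ) =
      vI ((g 0 0).re * (g 0 1).im) * dg (Real.log (g 0 0).re : ℝ) := by
  have hd := sl_det g
  rw [h10, mul_zero, sub_zero] at hd
  obtain ⟨a, ha⟩ : ∃ a : ℝ, a = (g 0 0).re := ⟨_, rfl⟩
  have e : g 0 0 = (a : ℂ) := by apply Complex.ext <;> simp [him, ha]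
  rw [← ha] at hpos ⊢
  have ha0 : (a : ℂ) ≠ 0 := by exact_mod_cast hpos.ne'
  have e11 : g 1 1 = (a : ℂ)⁻¹ := by
    rw [e] at hd; field_simp; linear_combination hd
  have e1 : Complex.exp ((Real.log a : ℝ) : ℂ) = a := by
    rw [← Complex.ofReal_exp, Real.exp_log hpos]
  have e2 : Complex.exp (-((Real.log a : ℝ) : ℂ)) = (a : ℂ)⁻¹ := by
    rw [Complex.exp_neg, e1]
  unfold vI
  apply sl_ext <;> simp only [mul00, mul01, mul10, mul11, uM00, uM01, uM10, uM11, dg00, dg01, dg10,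
    dg11, e, e11, h10, e1, e2]
  · ring
  · push_cast
    field_simp
    have := Complex.re_add_im (g 0 1)
    linear_combination -this
  · ring
  · ring

theorem dgs_b {Λ : Subgroup SL2C} {Y : Set SL2C} (hY : IsMinSet Λ US Y)
    (h : ∃ᶠ g in 𝓝 (1 : SL2C), g ∈ Ret Y Y ∧ g 1 0 = 0 ∧ (g 0 0).im = 0 ∧ 0 < (g 0 0).re ∧
      (g 0 1).im = 0 ∧ (g 0 0).re ≠ 1)
    (t : ℝ) : dg t ∈ Ret Y Y := by
  let S : AddSubgroup ℝ :=
    { carrier := {t : ℝ | ∀ y ∈ Y, y * dg t ∈ Y ∧ y * dg ((-t : ℝ) : ℂ) ∈ Y}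
      zero_mem' := by intro y hy; simp [dg_zero, hy]
      add_mem' := by
        intro a b ha hb y hy
        constructor
        · have := (hb _ (ha y hy).1).1
          push_cast; rw [dg_add]; rwa [mul_assoc] at this
        · have := (hb _ (ha y hy).2).2
          rw [mul_assoc, ← dg_add] at this
          rw [neg_add]; push_cast at this ⊢; exact this
      neg_mem' := by
        intro a ha y hy
        refine ⟨(ha y hy).2, ?_⟩
        rw [neg_neg]; exact (ha y hy).1 }
  have hcl : IsClosed (S : Set ℝ) := by
    have : (S : Set ℝ) = ⋂ y ∈ Y, ({t : ℝ | y * dg t ∈ Y} ∩ {t : ℝ | y * dg ((-t : ℝ) : ℂ) ∈ Y}) := by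
      ext t; simp only [Set.mem_iInter]; rfl
    rw [this]
    refine isClosed_biInter fun y _ => IsClosed.inter ?_ ?_
    · exact hY.cl.preimage (continuous_const.mul (continuous_dg.comp (by fun_prop)))
    · exact hY.cl.preimage (continuous_const.mul (continuous_dg.comp (by fun_prop)))
  have hdense : Dense (S : Set ℝ) := by
    apply AddSubgroup.dense_of_not_isolated_zero
    intro ε hε
    have hlog : Tendsto (fun g : SL2C => Real.log (g 0 0).re) (𝓝 1) (𝓝 0) := by
      have h1 : Tendsto (fun g : SL2C => (g 0 0).re) (𝓝 1) (𝓝 1) := by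
        have := ((Complex.continuous_re.comp (continuous_entry 0 0)).tendsto (1 : SL2C))
        simpa [Function.comp_def] using this
      have := (Real.continuousAt_log one_ne_zero).tendsto.comp h1
      simpa [Function.comp_def] using this
    obtain ⟨g, ⟨hR, h10, him, hpos, h01, hne⟩, hs⟩ := (h.and_eventually
      (Metric.tendsto_nhds.1 hlog ε hε)).exists
    have hm : dg (Real.log (g 0 0).re : ℝ) ∈ Ret Y Y := by
      have e := tri_real h10 him hpos
      rw [h01, mul_zero, vI_zero, one_mul] at e
      rw [← e]
      exact Ret.rmul hY.ri hR (uM_mem_US _)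
    have hm' : dg ((-Real.log (g 0 0).re : ℝ) : ℂ) ∈ Ret Y Y := by
      have := Ret.inv_mem hm
      rw [← dg_neg] at this
      rwa [Complex.ofReal_neg]
    have hmS : Real.log (g 0 0).re ∈ S := fun y hy =>
      ⟨hY.norm_mem hY.cl hY.li hY.ri hm (dg_norm _) y hy,
       hY.norm_mem hY.cl hY.li hY.ri hm' (dg_norm _) y hy⟩
    have hl0 : Real.log (g 0 0).re ≠ 0 := by
      intro h0
      rcases Real.log_eq_zero.1 h0 with h | h | h <;> [linarith; exact hne h; linarith]
    rw [Real.dist_eq, sub_zero] at hs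
    rcases lt_or_gt_of_ne hl0 with h | h
    · refine ⟨_, S.neg_mem hmS, ?_⟩
      rw [abs_of_neg h] at hs
      exact ⟨by linarith, hs⟩
    · refine ⟨_, hmS, ?_⟩
      rw [abs_of_pos h] at hs
      exact ⟨h, hs⟩
  have ht : t ∈ (S : Set ℝ) := by
    rw [← hcl.closure_eq, hdense.closure_eq]; trivial
  obtain ⟨y, hy⟩ := hY.ne
  exact ⟨y, hy, (ht y hy).1⟩

theorem geom_aux {q s r : ℝ} (hq : 1 ≤ q) (hs : 0 < s) (hr : 0 ≤ r) :
    ∃ k : ℕ, |s * (∑ i ∈ Finset.range k, q ^ i) - r| ≤ s + (q - 1) * r := by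
  have hck : ∀ k : ℕ, (k : ℝ) ≤ ∑ i ∈ Finset.range k, q ^ i := by
    intro k
    have : ∑ i ∈ Finset.range k, (1 : ℝ) ≤ ∑ i ∈ Finset.range k, q ^ i :=
      Finset.sum_le_sum fun i _ => one_le_pow₀ hq
    simpa using this
  have hex : ∃ k : ℕ, r < s * ∑ i ∈ Finset.range k, q ^ i := by
    obtain ⟨k, hk⟩ := exists_nat_gt (r / s)
    refine ⟨k, ?_⟩
    rw [div_lt_iff₀ hs] at hk
    nlinarith [hck k]
  classical
  have h1 := Nat.find_spec hex
  have hmin : ∀ m < Nat.find hex, _ := fun m hm => Nat.find_min hex hm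
  cases hk : Nat.find hex with
  | zero => rw [hk] at h1; simp at h1; linarith
  | succ j =>
    rw [hk] at h1 hmin
    have h2 := not_lt.1 (hmin j (Nat.lt_succ_self j))
    refine ⟨j, ?_⟩
    rw [geom_sum_succ] at h1
    rw [abs_of_nonpos (by linarith)]
    nlinarith

theorem b1_step {Λ : Subgroup SL2C} {Y X : Set SL2C}
    (hY : IsMinSet Λ US Y) (rX : RInv HS X) (hYX : Y ⊆ X) {g : SL2C}
    (hR : g ∈ Ret Y Y) (h10 : g 1 0 = 0) (him : (g 0 0).im = 0) (hpos : 0 < (g 0 0).re) (k : ℕ) :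
    vI ((g 0 0).re * (g 0 1).im * ∑ i ∈ Finset.range k, ((g 0 0).re ^ 2) ^ i) ∈ Ret Y X := by
  obtain ⟨a, ha⟩ : ∃ a : ℝ, a = (g 0 0).re := ⟨_, rfl⟩
  obtain ⟨σ, hσ⟩ : ∃ σ : ℝ, σ = a * (g 0 1).im := ⟨_, rfl⟩
  obtain ⟨t, ht⟩ : ∃ t : ℝ, t = Real.log a := ⟨_, rfl⟩
  have e := tri_real h10 him hpos
  have hl : vI σ * dg t ∈ Ret Y Y := by
    rw [ht, hσ, ha, ← e]
    exact Ret.rmul hY.ri hR (uM_mem_US _)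
  rw [← ha] at hpos ⊢
  rw [← hσ]
  have eq : Real.exp (2 * t) = a ^ 2 := by
    rw [two_mul, Real.exp_add, ht, Real.exp_log hpos]; ring
  have hst : ∀ y ∈ Y, y * (vI σ * dg t) ∈ Y := by
    refine hY.norm_mem hY.cl hY.li hY.ri hl ?_
    intro l hl
    obtain ⟨l1, hl1, e1⟩ := vI_comm σ l hl
    obtain ⟨l2, hl2, e2⟩ := dg_norm t l1 hl1
    exact ⟨l2, hl2, by rw [← mul_assoc, e1, mul_assoc, e2]; group⟩
  have key : ∀ k : ℕ, ∀ y ∈ Y,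
      y * (vI (σ * ∑ i ∈ Finset.range k, (a ^ 2) ^ i) * dg ((k * t : ℝ) : ℂ)) ∈ Y := by
    intro k
    induction k with
    | zero => intro y hy; simpa [vI_zero, dg_zero] using hy
    | succ k ih =>
      intro y hy
      have h2 := ih _ (hst y hy)
      convert h2 using 1
      rw [geom_sum_succ]
      have e1 : σ * (a ^ 2 * ∑ i ∈ Finset.range k, (a ^ 2) ^ i + 1) =
          σ + a ^ 2 * (σ * ∑ i ∈ Finset.range k, (a ^ 2) ^ i) := by ring
      have e2 : (((k + 1 : ℕ) * t : ℝ) : ℂ) = (t : ℂ) + ((k * t : ℝ) : ℂ) := by push_cast; ring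
      rw [e1, e2, vI_add, dg_add, ← eq]
      have e3 := dg_vI t (σ * ∑ i ∈ Finset.range k, (Real.exp (2 * t)) ^ i)
      calc _ = y * vI σ * (vI (Real.exp (2 * t) * (σ * ∑ i ∈ Finset.range k, (Real.exp (2 * t)) ^ i)) *
            dg t) * dg ((k * t : ℝ) : ℂ) := by group
        _ = _ := by rw [← e3]; group
  obtain ⟨y, hy⟩ := hY.ne
  refine ⟨y, hy, ?_⟩
  have h3 := rX _ (hYX (key k y hy)) _ (HS_inv (dg_mem_HS (k * t)))
  convert h3 using 1
  group

theorem b1_half {Λ : Subgroup SL2C} (hc : Coc Λ) {Y X : Set SL2C}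
    (hY : IsMinSet Λ US Y) (hX : IsClosed X) (lX : LInv Λ X) (rX : RInv HS X) (hYX : Y ⊆ X) (ε : ℝ)
    (hε : ε = 1 ∨ ε = -1)
    (h : ∃ᶠ g in 𝓝 (1 : SL2C), g ∈ Ret Y Y ∧ g 1 0 = 0 ∧ (g 0 0).im = 0 ∧ 1 ≤ (g 0 0).re ∧
      0 < ε * (g 0 1).im) : Half Y X := by
  refine ⟨ε, hε, fun r hr => ?_⟩
  have hεε : ε * ε = 1 := by rcases hε with rfl | rfl <;> norm_num
  have hεa : |ε| = 1 := by rcases hε with rfl | rfl <;> norm_num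
  obtain ⟨g, hg1, hg⟩ := exists_seq_forall_of_frequently h
  have hre : Tendsto (fun n => (g n 0 0).re) atTop (𝓝 1) := by
    have := (Complex.continuous_re.tendsto _).comp (tendsto_SL.1 hg1 0 0)
    simpa [Function.comp_def] using this
  have him : Tendsto (fun n => (g n 0 1).im) atTop (𝓝 0) := by
    have := (Complex.continuous_im.tendsto _).comp (tendsto_SL.1 hg1 0 1)
    simpa [Function.comp_def] using this
  have hk : ∀ n, ∃ s : ℝ, vI s ∈ Ret Y X ∧ |s - ε * r| ≤
      (g n 0 0).re * (ε * (g n 0 1).im) + ((g n 0 0).re ^ 2 - 1) * r := by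
    intro n
    obtain ⟨h1, h2, h3, h4, h5⟩ := hg n
    obtain ⟨k, hk⟩ := geom_aux (q := (g n 0 0).re ^ 2) (s := (g n 0 0).re * (ε * (g n 0 1).im))
      (r := r) (one_le_pow₀ h4) (by positivity) hr
    refine ⟨_, b1_step hY rX hYX h1 h2 h3 (by linarith) k, le_trans (le_of_eq ?_) hk⟩
    rw [← one_mul (abs _), ← hεa, ← abs_mul]
    congr 1
    linear_combination (-r) * hεε
  choose s hs hb using hk
  have hlim : Tendsto s atTop (𝓝 (ε * r)) := by
    rw [tendsto_iff_dist_tendsto_zero]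
    have h0 : Tendsto (fun n => (g n 0 0).re * (ε * (g n 0 1).im) + ((g n 0 0).re ^ 2 - 1) * r)
        atTop (𝓝 0) := by
      have := (hre.mul (him.const_mul ε)).add (((hre.pow 2).sub_const 1).mul_const r)
      simpa using this
    exact squeeze_zero (fun n => dist_nonneg) hb h0
  exact (Ret.closed hc hY.cl hX hY.li lX).mem_of_tendsto ((continuous_vI.tendsto _).comp hlim)
    (Eventually.of_forall hs)

theorem b1 {Λ : Subgroup SL2C} (hc : Coc Λ) {Y X : Set SL2C}
    (hY : IsMinSet Λ US Y) (hX : IsClosed X) (lX : LInv Λ X) (rX : RInv HS X) (hYX : Y ⊆ X)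
    (h : ∃ᶠ g in 𝓝 (1 : SL2C), g ∈ Ret Y Y ∧ g 1 0 = 0 ∧ (g 0 0).im = 0 ∧ 0 < (g 0 0).re ∧
      (g 0 1).im ≠ 0) : Half Y X := by
  have h2 : ∃ᶠ g in 𝓝 (1 : SL2C), g ∈ Ret Y Y ∧ g 1 0 = 0 ∧ (g 0 0).im = 0 ∧ 1 ≤ (g 0 0).re ∧
      (g 0 1).im ≠ 0 := by
    by_contra hno
    have hno' := not_frequently.1 hno
    have hinv : Tendsto (fun g : SL2C => g⁻¹) (𝓝 1) (𝓝 1) := by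
      have := (continuous_inv (G := SL2C)).tendsto 1
      rwa [inv_one] at this
    refine h ?_
    filter_upwards [hno', hinv.eventually hno'] with g n1 n2
    rintro ⟨a1, a2, a3, a4, a5⟩
    rcases le_total 1 (g 0 0).re with h1 | h1
    · exact n1 ⟨a1, a2, a3, h1, a5⟩
    · have hd := sl_det g
      rw [a2, mul_zero, sub_zero] at hd
      have hre := congrArg Complex.re hd
      have him := congrArg Complex.im hd
      rw [Complex.mul_re, a3] at hre
      rw [Complex.mul_im, a3] at him
      simp only [zero_mul, sub_zero, add_zero, Complex.one_re, Complex.one_im] at hre him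
      refine n2 ⟨Ret.inv_mem a1, ?_, ?_, ?_, ?_⟩
      · rw [inv10, a2, neg_zero]
      · rw [inv00]
        exact (mul_eq_zero.1 him).resolve_left a4.ne'
      · rw [inv00]
        nlinarith
      · rw [inv01, Complex.neg_im]
        exact neg_ne_zero.2 a5
  have h3 : (∃ᶠ g in 𝓝 (1 : SL2C), g ∈ Ret Y Y ∧ g 1 0 = 0 ∧ (g 0 0).im = 0 ∧ 1 ≤ (g 0 0).re ∧
      0 < 1 * (g 0 1).im) ∨ (∃ᶠ g in 𝓝 (1 : SL2C), g ∈ Ret Y Y ∧ g 1 0 = 0 ∧ (g 0 0).im = 0 ∧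
      1 ≤ (g 0 0).re ∧ 0 < (-1) * (g 0 1).im) := by
    rw [← frequently_or_distrib]
    refine h2.mono ?_
    rintro g ⟨a1, a2, a3, a4, a5⟩
    rcases lt_or_gt_of_ne a5 with h | h
    · exact Or.inr ⟨a1, a2, a3, a4, by linarith⟩
    · exact Or.inl ⟨a1, a2, a3, a4, by linarith⟩
  rcases h3 with h3 | h3
  · exact b1_half hc hY hX lX rX hYX 1 (Or.inl rfl) h3
  · exact b1_half hc hY hX lX rX hYX (-1) (Or.inr rfl) h3

theorem caseII {Λ : Subgroup SL2C} (hc : Coc Λ) (hd : Dsc Λ) {Y X : Set SL2C}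
    (hY : IsMinSet Λ US Y) (hX : IsClosed X) (lX : LInv Λ X) (rX : RInv HS X) (hYX : Y ⊆ X)
    (hA : ∃ᶠ g in 𝓝 (1 : SL2C), g ∈ Ret Y X ∧ g ∉ HS) : Half Y X := by
  by_cases hI : ∃ᶠ p in 𝓝 (1 : SL2C), p ∈ Ret Y X ∧ Form p ∧ ((p 1 0).im ≠ 0 ∨ (p 0 0).im ≠ 0)
  · exact caseI hc hY hX lX rX hYX hI
  have hI' := not_frequently.1 hI
  have hrepos : ∀ᶠ p in 𝓝 (1 : SL2C), 0 < (p 0 0).re := by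
    refine (Complex.continuous_re.comp (continuous_entry 0 0)).continuousAt.eventually_const_lt ?_
    simp
  have hvI : ∀ᶠ p in 𝓝 (1 : SL2C), p ∈ Ret Y X → Form p → p = vI (p 0 1).im := by
    filter_upwards [hI', hrepos] with p hp h0 hR hF
    have h10 : (p 1 0).im = 0 := by
      by_contra h; exact hp ⟨hR, hF, Or.inl h⟩
    have h00 : (p 0 0).im = 0 := by
      by_contra h; exact hp ⟨hR, hF, Or.inr h⟩
    obtain ⟨f1, f2, f3, f4⟩ := hF
    have e10 : p 1 0 = 0 := Complex.ext f4 h10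
    have hdd := sl_det p
    have hre := congrArg Complex.re hdd
    rw [e10, mul_zero, sub_zero, Complex.mul_re, h00, f1, zero_mul, sub_zero, Complex.one_re] at hre
    have h1 : (p 0 0).re = 1 := by nlinarith
    unfold vI
    apply sl_ext <;> simp only [uM00, uM01, uM10, uM11]
    · apply Complex.ext <;> simp [h1, h00]
    · apply Complex.ext <;> simp [f3]
    · exact e10
    · apply Complex.ext <;> simp [f1, f2, h1, h00]
  have hpull : Tendsto (fun g : SL2C => g * hf g) (𝓝 1) (𝓝 1) := by
    have := (tendsto_id (x := 𝓝 (1 : SL2C))).mul hf_tendsto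
    rwa [mul_one] at this
  have hgood : ∀ᶠ g in 𝓝 (1 : SL2C), g ∈ Ret Y X → hf g ∈ HS ∧ ∃ s : ℝ, g * hf g = vI s := by
    filter_upwards [hpull.eventually hvI, hf_good] with g h1 h2 hR
    exact ⟨h2.1, _, h1 (Ret.rmul rX hR h2.1) h2.2⟩
  obtain ⟨s₀, hs₀, hs₀R⟩ : ∃ s₀ : ℝ, s₀ ≠ 0 ∧ vI s₀ ∈ Ret Y X := by
    obtain ⟨g, ⟨hR, hnH⟩, hg⟩ := (hA.and_eventually hgood).exists
    obtain ⟨hH, s, hs⟩ := hg hR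
    refine ⟨s, ?_, hs ▸ Ret.rmul rX hR hH⟩
    rintro rfl
    rw [vI_zero, mul_eq_one_iff_eq_inv] at hs
    exact hnH (hs ▸ HS_inv hH)
  have hsub : Ret Y Y ⊆ Ret Y X := fun g ⟨y, hy, h⟩ => ⟨y, hy, hYX h⟩
  have hrec := (recur hc hd hY.ne hY.li hY.ri).and_eventually (hgood.and hrepos)
  have hsplit : (∃ᶠ g in 𝓝 (1 : SL2C), g ∈ Ret Y Y ∧ hf g ∈ HS ∧ (∃ s : ℝ, g * hf g = vI s) ∧
      g 1 0 ≠ 0) ∨ (∃ᶠ g in 𝓝 (1 : SL2C), (g ∈ Ret Y Y ∧ g 1 0 = 0 ∧ (g 0 0).im = 0 ∧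
      0 < (g 0 0).re ∧ (g 0 1).im = 0 ∧ (g 0 0).re ≠ 1) ∨ (g ∈ Ret Y Y ∧ g 1 0 = 0 ∧
      (g 0 0).im = 0 ∧ 0 < (g 0 0).re ∧ (g 0 1).im ≠ 0)) := by
    rw [← frequently_or_distrib]
    refine hrec.mono ?_
    rintro g ⟨⟨hR, hU⟩, hg, hpos⟩
    obtain ⟨hH, s, hs⟩ := hg (hsub hR)
    by_cases h10 : g 1 0 = 0
    swap
    · exact Or.inl ⟨hR, hH, ⟨s, hs⟩, h10⟩
    right
    have eg : g = vI s * (hf g)⁻¹ := by rw [← hs]; group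
    have h11 : (g 1 1).im = 0 := by
      rw [eg, mul11]; unfold vI; rw [uM10, uM11]
      simpa using (HS_inv hH) 1 1
    have hdd := sl_det g
    rw [h10, mul_zero, sub_zero] at hdd
    have hre := congrArg Complex.re hdd
    have him := congrArg Complex.im hdd
    rw [Complex.mul_re, h11] at hre
    rw [Complex.mul_im, h11] at him
    simp only [mul_zero, sub_zero, zero_add, Complex.one_re, Complex.one_im] at hre him
    have h00 : (g 0 0).im = 0 := by
      rcases mul_eq_zero.1 him with h | h
      · exact h
      · rw [h] at hre; simp at hre
    by_cases h01 : (g 0 1).im = 0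
    swap
    · exact Or.inr ⟨hR, h10, h00, hpos, h01⟩
    refine Or.inl ⟨hR, h10, h00, hpos, h01, fun h1 => hU ⟨(g 0 1).re, ?_⟩⟩
    rw [h1, one_mul] at hre
    apply sl_ext <;> simp only [uM00, uM01, uM10, uM11]
    · apply Complex.ext <;> simp [h1, h00]
    · apply Complex.ext <;> simp [h01]
    · exact h10.symm
    · apply Complex.ext <;> simp [hre, h11]
  rcases hsplit with h | h
  · exact half_of_dg hY rX hYX hs₀ hs₀R (dgs_a hc hY h)
  rcases frequently_or_distrib.1 h with h | h
  · exact half_of_dg hY rX hYX hs₀ hs₀R (dgs_b hY h)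
  · exact b1 hc hY hX lX rX hYX h

/-! ### Closed or dense -/

theorem freq_of_closure {Y X E : Set SL2C} {y : SL2C} (hy : y ∈ Y) (hE : E ⊆ X)
    (hcl : y ∈ closure E) (hn : ∀ x ∈ E, y⁻¹ * x ∉ HS) :
    ∃ᶠ g in 𝓝 (1 : SL2C), g ∈ Ret Y X ∧ g ∉ HS := by
  have ht : Tendsto (fun x : SL2C => y⁻¹ * x) (𝓝 y) (𝓝 1) := by
    have := (continuous_const_mul (y⁻¹ : SL2C)).tendsto y
    rwa [inv_mul_cancel] at this
  refine ht.frequently ((mem_closure_iff_frequently.1 hcl).mono fun x hx => ⟨⟨y, hy, ?_⟩, hn x hx⟩)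
  rw [mul_inv_cancel_left]
  exact hE hx

theorem main_SL {Λ : Subgroup SL2C} (hc : Coc Λ) (hd : Dsc Λ) (g0 : SL2C) :
    IsClosed {x : SL2C | ∃ γ ∈ Λ, ∃ h ∈ HS, x = γ * g0 * h} ∨
    Dense {x : SL2C | ∃ γ ∈ Λ, ∃ h ∈ HS, x = γ * g0 * h} := by
  obtain ⟨D, hD⟩ : ∃ D : Set SL2C, D = {x : SL2C | ∃ γ ∈ Λ, ∃ h ∈ HS, x = γ * g0 * h} := ⟨_, rfl⟩
  rw [← hD]
  by_cases hcD : IsClosed D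
  · exact Or.inl hcD
  right
  have H1 : (1 : SL2C) ∈ HS := by
    have := dg_mem_HS 0
    rwa [Complex.ofReal_zero, dg_zero] at this
  have lD : LInv Λ D := by
    rw [hD]
    rintro γ hγ _ ⟨δ, hδ, h, hh, rfl⟩
    exact ⟨γ * δ, Λ.mul_mem hγ hδ, h, hh, by group⟩
  have rD : RInv HS D := by
    rw [hD]
    rintro _ ⟨δ, hδ, h, hh, rfl⟩ l hl
    exact ⟨δ, hδ, h * l, HS_mul hh hl, by group⟩
  have lX : LInv Λ (closure D) := fun γ hγ y hy =>
    map_mem_closure (continuous_const_mul γ) hy (fun x hx => lD γ hγ x hx)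
  have rX : RInv HS (closure D) := fun y hy l hl =>
    map_mem_closure (f := fun x => x * l) (continuous_mul_const l) hy (fun x hx => rD x hx l hl)
  have neD : D.Nonempty := ⟨1 * g0 * 1, by rw [hD]; exact ⟨1, Λ.one_mem, 1, H1, rfl⟩⟩
  -- elements of the complement
  have first : ∀ Y ⊆ closure D, (∃ y ∈ Y, y ∉ D) →
      ∃ᶠ g in 𝓝 (1 : SL2C), g ∈ Ret Y (closure D) ∧ g ∉ HS := by
    rintro Y hYX ⟨y, hy, hyD⟩
    refine freq_of_closure hy subset_closure (hYX hy) fun x hx hH => hyD ?_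
    have := rD x hx _ (HS_inv hH)
    simpa using this
  have claim : ∃ Y ⊆ closure D, IsMinSet Λ US Y ∧
      ∃ᶠ g in 𝓝 (1 : SL2C), g ∈ Ret Y (closure D) ∧ g ∉ HS := by
    obtain ⟨Y, hYX, hY⟩ := exists_min hc (L := US) isClosed_closure neD.closure lX
      (fun y hy l hl => rX y hy l (US_sub_HS hl))
    by_cases hex : ∃ y ∈ Y, y ∉ D
    · exact ⟨Y, hYX, hY, first Y hYX hex⟩
    push Not at hex
    obtain ⟨y, hy⟩ := hY.ne
    by_cases hyc : y ∈ closure (closure D \ D)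
    · refine ⟨Y, hYX, hY, freq_of_closure hy Set.sdiff_subset hyc fun x hx hH => hx.2 ?_⟩
      have := rD y (hex y hy) _ hH
      simpa using this
    have lE : LInv Λ (closure D \ D) := fun γ hγ x hx =>
      ⟨lX γ hγ x hx.1, fun h => hx.2 (by simpa using lD _ (Λ.inv_mem hγ) _ h)⟩
    have rE : RInv HS (closure D \ D) := fun x hx l hl =>
      ⟨rX x hx.1 l hl, fun h => hx.2 (by simpa using rD _ h _ (HS_inv hl))⟩
    have clE : IsClosed (closure D \ D) := by
      refine isClosed_of_closure_subset fun z hz => ?_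
      refine ⟨closure_minimal Set.sdiff_subset isClosed_closure hz, fun hzD => hyc ?_⟩
      have hyD := hex y hy
      rw [hD] at hyD hzD
      obtain ⟨γ, hγ, h, hh, e⟩ := hyD
      obtain ⟨δ, hδ, k, hk, e'⟩ := hzD
      have e2 : y = γ * δ⁻¹ * z * (k⁻¹ * h) := by rw [e, e']; group
      rw [e2]
      refine map_mem_closure (f := fun x => γ * δ⁻¹ * x * (k⁻¹ * h))
        ((continuous_mul_const (k⁻¹ * h)).comp (continuous_const_mul (γ * δ⁻¹))) hz fun x hx => ?_
      exact rE _ (lE _ (Λ.mul_mem hγ (Λ.inv_mem hδ)) _ hx) _ (HS_mul (HS_inv hk) hh)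
    have neE : (closure D \ D).Nonempty := by
      rw [Set.nonempty_iff_ne_empty]
      intro h0
      exact hcD (isClosed_of_closure_subset (Set.diff_eq_empty.1 h0))
    obtain ⟨Y1, hY1X, hY1⟩ := exists_min hc (L := US) clE neE lE
      (fun y hy l hl => rE y hy l (US_sub_HS hl))
    obtain ⟨y1, hy1⟩ := hY1.ne
    exact ⟨Y1, fun x hx => (hY1X hx).1, hY1, first Y1 (fun x hx => (hY1X hx).1)
      ⟨y1, hy1, (hY1X hy1).2⟩⟩
  obtain ⟨Y, hYX, hY, hfr⟩ := claim
  have hhalf := caseII hc hd hY isClosed_closure lX rX hYX hfr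
  obtain ⟨z, hz⟩ := half_AN hc hY isClosed_closure lX rX hhalf
  exact fun g => closed_AN_full hc hd isClosed_closure lX hz g

/-! ### Passing to the quotient -/

theorem pr_surj : Function.Surjective pr := QuotientGroup.mk'_surjective _
theorem pr_cont : Continuous pr := QuotientGroup.continuous_mk
theorem pr_quot : Topology.IsQuotientMap pr := QuotientGroup.isQuotientMap_mk _
theorem pr_open : IsOpenMap pr := QuotientGroup.isOpenMap_coe
theorem pr_one {g : SL2C} (h : pr g = 1) : g ∈ Subgroup.center SL2C := by
  exact (QuotientGroup.eq_one_iff g).1 h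

/-- projection from `SL2C` -/
def qq (Γ : Subgroup PSL2C) (g : SL2C) : XΓ Γ := mkX Γ (pr g)

theorem qq_surj (Γ : Subgroup PSL2C) : Function.Surjective (qq Γ) := by
  intro x
  obtain ⟨g, rfl⟩ := Quotient.exists_rep x
  obtain ⟨k, rfl⟩ := pr_surj g
  exact ⟨k, rfl⟩

theorem qq_quot (Γ : Subgroup PSL2C) : Topology.IsQuotientMap (qq Γ) :=
  Topology.IsQuotientMap.comp (g := mkX Γ) isQuotientMap_quotient_mk' pr_quot

theorem qq_eq (Γ : Subgroup PSL2C) (g k : SL2C) :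
    qq Γ g = qq Γ k ↔ ∃ γ ∈ Γ.comap pr, k = γ * g := by
  have : qq Γ g = qq Γ k ↔ pr k * (pr g)⁻¹ ∈ Γ := by
    unfold qq mkX
    rw [Quotient.eq'', QuotientGroup.rightRel_apply]
  rw [this]
  constructor
  · intro h
    refine ⟨k * g⁻¹, ?_, by group⟩
    rw [Subgroup.mem_comap, map_mul, map_inv]; exact h
  · rintro ⟨γ, hγ, rfl⟩
    rw [Subgroup.mem_comap] at hγ
    simpa using hγ

theorem qq_open (Γ : Subgroup PSL2C) : IsOpenMap (qq Γ) := by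
  intro O hO
  rw [← (qq_quot Γ).isOpen_preimage]
  have : qq Γ ⁻¹' (qq Γ '' O) = ⋃ γ ∈ Γ.comap pr, (fun x => γ * x) '' O := by
    ext z
    simp only [Set.mem_preimage, Set.mem_image, Set.mem_iUnion, qq_eq]
    constructor
    · rintro ⟨x, hx, γ, hγ, rfl⟩
      exact ⟨γ, hγ, x, hx, rfl⟩
    · rintro ⟨γ, hγ, x, hx, rfl⟩
      exact ⟨x, hx, γ, hγ, rfl⟩
  rw [this]
  exact isOpen_biUnion fun γ _ => isOpenMap_mul_left γ O hO

theorem bridge_coc (Γ : Subgroup PSL2C) (hcpt : CompactSpace (XΓ Γ)) : Coc (Γ.comap pr) := by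
  let O : ℕ → Set SL2C := fun n => {g | ∀ i j, ‖g i j‖ < n}
  have hO : ∀ n, IsOpen (O n) := by
    intro n
    have : O n = ⋂ i, ⋂ j, {g : SL2C | ‖g i j‖ < n} := by ext g; simp [O]
    rw [this]
    exact isOpen_iInter_of_finite fun i => isOpen_iInter_of_finite fun j =>
      isOpen_lt (continuous_entry i j).norm continuous_const
  have hmono : Monotone fun n => qq Γ '' O n := by
    intro m n hmn
    refine Set.image_mono fun g hg i j => (hg i j).trans_le ?_
    exact_mod_cast hmn
  obtain ⟨n, hn⟩ := isCompact_univ.elim_directed_cover (fun n => qq Γ '' O n)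
    (fun n => qq_open Γ _ (hO n)) (by
      intro x _
      obtain ⟨g, rfl⟩ := qq_surj Γ x
      obtain ⟨n, hn⟩ := exists_nat_gt (∑ i, ∑ j, ‖g i j‖)
      refine Set.mem_iUnion.2 ⟨n, g, fun i j => lt_of_le_of_lt ?_ hn, rfl⟩
      calc ‖g i j‖ ≤ ∑ j, ‖g i j‖ :=
            Finset.single_le_sum (f := fun j => ‖g i j‖) (fun _ _ => norm_nonneg _) (Finset.mem_univ j)
        _ ≤ _ := Finset.single_le_sum (f := fun i => ∑ j, ‖g i j‖)
            (fun _ _ => Finset.sum_nonneg fun _ _ => norm_nonneg _) (Finset.mem_univ i))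
    hmono.directed_le
  refine ⟨n, fun g => ?_⟩
  obtain ⟨k, hk, e⟩ := hn (Set.mem_univ (qq Γ g))
  obtain ⟨γ, hγ, rfl⟩ := (qq_eq Γ g k).1 e.symm
  exact ⟨γ, hγ, fun i j => (hk i j).le⟩

theorem bridge_dsc (Γ : Subgroup PSL2C) (hdisc : DiscreteTopology Γ) : Dsc (Γ.comap pr) := by
  have h1 : IsOpen ({1} : Set Γ) := isOpen_discrete _
  obtain ⟨O, hO, e⟩ := isOpen_induced_iff.1 h1
  have h1O : (1 : PSL2C) ∈ O := by
    have : (1 : Γ) ∈ (Subtype.val ⁻¹' O : Set Γ) := by rw [e]; rfl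
    exact this
  refine ⟨pr ⁻¹' O, (hO.preimage pr_cont).mem_nhds (by simpa using h1O), fun γ hγ hγO => ?_⟩
  have h2 : (⟨pr γ, hγ⟩ : Γ) ∈ (Subtype.val ⁻¹' O : Set Γ) := hγO
  rw [e, Set.mem_singleton_iff, Subtype.ext_iff] at h2
  exact pr_one h2

theorem mem_Hset {k : SL2C} (h : k ∈ HS) : pr k ∈ Hset := by
  have hre : ∀ i j, (((k i j).re : ℝ) : ℂ) = k i j := fun i j => by
    apply Complex.ext <;> simp [h i j]
  have hd := sl_det k
  rw [← hre 0 0, ← hre 0 1, ← hre 1 0, ← hre 1 1] at hd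
  refine ⟨⟨!![(k 0 0).re, (k 0 1).re; (k 1 0).re, (k 1 1).re], ?_⟩, ?_⟩
  · rw [Matrix.det_fin_two_of]; exact_mod_cast hd
  · congr 1
    apply sl_ext
    · exact (hre 0 0).symm
    · exact (hre 0 1).symm
    · exact (hre 1 0).symm
    · exact (hre 1 1).symm

theorem map_mem_HS (g : Matrix.SpecialLinearGroup (Fin 2) ℝ) :
    Matrix.SpecialLinearGroup.map (algebraMap ℝ ℂ) g ∈ HS := by
  intro i j
  exact Complex.ofReal_im _

theorem preimage_orb (Γ : Subgroup PSL2C) (g0 : SL2C) :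
    qq Γ ⁻¹' (orb Γ (qq Γ g0) Hset) =
      {x : SL2C | ∃ γ ∈ Γ.comap pr, ∃ h ∈ HS, x = γ * g0 * h} := by
  have ha : ∀ k : SL2C, act Γ (qq Γ g0) (pr k) = qq Γ (g0 * k) := by
    intro k
    unfold qq; rw [map_mul]; rfl
  ext z
  constructor
  · rintro ⟨_, ⟨k, rfl⟩, e⟩
    change act Γ (qq Γ g0) (pr _) = qq Γ z at e
    rw [ha, qq_eq] at e
    obtain ⟨γ, hγ, rfl⟩ := e
    exact ⟨γ, hγ, _, map_mem_HS k, by rw [mul_assoc]⟩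
  · rintro ⟨γ, hγ, h, hh, rfl⟩
    refine ⟨_, mem_Hset hh, ?_⟩
    change act Γ (qq Γ g0) (pr _) = _
    rw [ha, qq_eq]
    exact ⟨γ, hγ, by rw [mul_assoc]⟩

theorem final_aux (Γ : Subgroup PSL2C) (hdisc : DiscreteTopology Γ) (hcpt : CompactSpace (XΓ Γ))
    (x : XΓ Γ) :
    IsClosed (orb Γ x Hset) ∨ Dense (orb Γ x Hset) := by
  obtain ⟨g0, rfl⟩ := qq_surj Γ x
  have h := main_SL (bridge_coc Γ hcpt) (bridge_dsc Γ hdisc) g0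
  rw [← preimage_orb] at h
  rcases h with h | h
  · exact Or.inl ((qq_quot Γ).isClosed_preimage.1 h)
  · right
    have := (qq_surj Γ).denseRange.dense_image (qq_quot Γ).continuous h
    exact this.mono (Set.image_preimage_subset _ _)

/-- If `Γ ≤ PSL(2,ℂ)` is a discrete subgroup with `Γ\G` compact (a uniform
lattice), then every orbit `xH` of `H = π(SL(2,ℝ))` is closed or dense in `Γ\G`. -/
theorem closed_or_dense_H_orbit_uniform_lattice
    (Γ : Subgroup PSL2C) (hdisc : DiscreteTopology Γ) (hcpt : CompactSpace (XΓ Γ))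
    (x : XΓ Γ) :
    IsClosed (orb Γ x Hset) ∨ Dense (orb Γ x Hset) := by
  exact final_aux Γ hdisc hcpt x


end
end
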